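/- arXiv:2503.18691 — 2 statements merged into one kernel-verified Lean document; each statement's English description precedes it below -/
import Mathlib

section
/- Fix k ∈ ℕ and a string b = (b₁,…,b_{k−1}) ∈ ℝ^{k−1}. For generic limit-periodic V : ℤ → ℝ (i.e., for every V in some dense Gδ subset of LP(ℤ,ℝ)), the spectrum of the discrete Schrödinger operator H_{V^{[k,b]}} is a Cantor set of zero Hausdorff dimension. -/
/-!
Write `H_U - E` for the operator attached to a bounded potential `U`, and say that `E` lies in a
gap of `U` when `H_U - E` is bounded below. Since the operators are symmetric and bounded, the
spectrum is exactly the complement of the gaps; it is nonempty and compact, and it moves by at most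
`‖U - U'‖` when `U` is replaced by `U'`.

*No isolated points* (`spectrum_preperfect`). An isolated spectral value would be an eigenvalue
whose eigenspace is finite-dimensional, because solutions of the difference equation are
determined by two consecutive values. The sieved potential of a limit-periodic `V` has almost
periods, and translating an eigenvector along them gives almost eigenvectors running off to
infinity, which is impossible.

*Opening gaps* (`gap_dense`). For a periodic `V`, the energy `E` is in a gap of the sieved potential
as soon as the monodromy matrix has trace of absolute value larger than `2` (`bddBelow_of_trace`).
The monodromy is a word in a fixed matrix, describing the passage through the string `b`, and in
shears by the entries of `V`. Unless `E` is one of the finitely many roots of a polynomial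
(`exceptional_finite`), an arbitrarily small perturbation of the word, possibly after repeating it,
is hyperbolic (`word_hyperbolic_dense`).

*Efficient covers* (`cover_dense`). Away from small neighbourhoods of the exceptional energies,
compactness yields `J` periodic perturbations of `V` such that every energy is in a gap of at least
one of them, with a uniform constant (`finite_gap_family`). Let `W` run through these perturbations
cyclically, staying with each for a stretch of length `2h` (measured after sieving). If `E` is in
the gap of the `j`-th one, approximate eigenvectors at `E` are exponentially small in the middle of
the `j`-th stretches (`decay`), so the bonds there can be cut at an exponentially small cost,
leaving copies of a finite matrix (`decouple`). Hence the spectrum is contained in the union of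
exponentially small intervals (in `h`) about at most `2 J² h` points and of the chosen
neighbourhoods of the exceptional energies (`localization`).

*Genericity.* For every `m`, the potentials whose spectrum has a cover with
`∑ d^(1/(m+1)) < 1/(m+1)` form an open dense set. By Baire's theorem the intersection over `m` is a
dense `Gδ`; on it the spectrum has Hausdorff dimension zero, and therefore empty interior.
-/

open Set MeasureTheory BoundedContinuousFunction

noncomputable section

/-- ℓ²(ℤ; ℝ). -/
abbrev Ell2 : Type := lp (fun _ : ℤ => ℝ) 2

/-- Spectrum of the discrete Schrödinger operator `H_W = Δ + W` on `ℓ²(ℤ)`: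
`E` lies in the spectrum iff `H_W - E` is not a linear bijection of `ℓ²(ℤ)`
(for bounded `W`, by the open mapping theorem this is equivalent to `H_W - E`
not being boundedly invertible). -/
def SchrodingerSpectrum (W : ℤ → ℝ) : Set ℝ :=
  {E : ℝ | ¬ ∃ T : Ell2 ≃ₗ[ℝ] Ell2,
      ∀ f : Ell2, ∀ n : ℤ,
        (T f) n = f (n - 1) + f (n + 1) + (W n - E) * f n}

/-- A Cantor set of zero Hausdorff dimension: nonempty, compact, without isolated
points, with empty interior, and of Hausdorff dimension zero. -/
def IsZeroDimCantor (s : Set ℝ) : Prop :=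
  s.Nonempty ∧ IsCompact s ∧ Preperfect s ∧ interior s = ∅ ∧ dimH s = 0

/-- Periodic bounded sequences. -/
def IsPeriodicSeq {α : Type*} [PseudoMetricSpace α] (W : ℤ →ᵇ α) : Prop :=
  ∃ q : ℕ, 0 < q ∧ ∀ n : ℤ, W (n + q) = W n

/-- The limit-periodic functions `ℤ → ℝ`: uniform limits of periodic functions. -/
def LPZ : Set (ℤ →ᵇ ℝ) := closure {W : ℤ →ᵇ ℝ | IsPeriodicSeq W}

/-- `V^{[k,b]}`: insert the string `b = (b₁,…,b_{k-1})` between consecutive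
entries of `V`; the entry at `n` with `n % k = ℓ ∈ {1,…,k-1}` is `b_ℓ`. -/
def sieveWith (V : ℤ → ℝ) (k : ℕ) (b : Fin (k - 1) → ℝ) : ℤ → ℝ :=
  fun n =>
    if hdvd : (k : ℤ) ∣ n then V (n / k)
    else
      if hk : 0 < k then
        b ⟨(n % (k : ℤ)).toNat - 1, by
          have h1 : 0 ≤ n % (k : ℤ) := Int.emod_nonneg n (by exact_mod_cast hk.ne')
          have h2 : n % (k : ℤ) < (k : ℤ) := Int.emod_lt_of_pos n (by exact_mod_cast hk)
          have h3 : n % (k : ℤ) ≠ 0 := fun h0 => hdvd (Int.dvd_of_emod_eq_zero h0)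
          omega⟩
      else 0

open scoped InnerProductSpace

/-! ### The operators on `ℓ²(ℤ)` -/

lemma ell2_hasSum (f : Ell2) : HasSum (fun n => f n ^ 2) (‖f‖ ^ 2) := by
  have h := lp.hasSum_norm (p := 2) (by norm_num) f
  simpa using h

lemma ell2_summable (f : Ell2) : Summable (fun n => f n ^ 2) := (ell2_hasSum f).summable

lemma ell2_norm_sq (f : Ell2) : ‖f‖ ^ 2 = ∑' n, f n ^ 2 := (ell2_hasSum f).tsum_eq.symm

lemma ell2_mem {f : ℤ → ℝ} (h : Summable fun n => f n ^ 2) :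
    Memℓp (E := fun _ : ℤ => ℝ) f 2 := by
  apply memℓp_gen
  simpa using h

/-- The element of `ℓ²(ℤ)` given by a square-summable sequence. -/
def ell2Mk (f : ℤ → ℝ) (h : Summable fun n => f n ^ 2) : Ell2 := ⟨f, ell2_mem h⟩

@[simp] lemma ell2Mk_apply (f : ℤ → ℝ) (h : Summable fun n => f n ^ 2) (n : ℤ) :
    ell2Mk f h n = f n := rfl

lemma ell2_ext {f g : Ell2} (h : ∀ n, f n = g n) : f = g := lp.ext (funext h)

lemma ell2_add_apply (f g : Ell2) (n : ℤ) : (f + g) n = f n + g n := rfl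

lemma ell2_sub_apply (f g : Ell2) (n : ℤ) : (f - g) n = f n - g n := rfl

lemma ell2_smul_apply (c : ℝ) (f : Ell2) (n : ℤ) : (c • f) n = c * f n := rfl

lemma ell2_norm_le {f g : Ell2} (h : ∀ n, |f n| ≤ |g n|) : ‖f‖ ≤ ‖g‖ :=
  lp.norm_mono (by norm_num) (by simpa using h)

lemma ell2_summable_shift (f : Ell2) (a : ℤ) : Summable fun n => f (n + a) ^ 2 :=
  (Equiv.addRight a).summable_iff.2 (ell2_summable f)

lemma ell2_norm_shift (f : Ell2) (a : ℤ) :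
    ‖ell2Mk (fun n => f (n + a)) (ell2_summable_shift f a)‖ = ‖f‖ := by
  rw [← sq_eq_sq₀ (norm_nonneg _) (norm_nonneg _), ell2_norm_sq, ell2_norm_sq]
  exact (Equiv.addRight a).tsum_eq (fun n => f n ^ 2)

/-- Translation `(shiftOp a f) n = f (n + a)`, an isometry of `ℓ²(ℤ)`. -/
def shiftOp (a : ℤ) : Ell2 →ₗᵢ[ℝ] Ell2 where
  toFun f := ell2Mk (fun n => f (n + a)) (ell2_summable_shift f a)
  map_add' f g := ell2_ext fun n => by simp
  map_smul' c f := ell2_ext fun n => by simp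
  norm_map' f := ell2_norm_shift f a

@[simp] lemma shiftOp_apply (a : ℤ) (f : Ell2) (n : ℤ) : shiftOp a f n = f (n + a) := rfl

lemma ell2_summable_mul (U : ℤ →ᵇ ℝ) (f : Ell2) : Summable fun n => (U n * f n) ^ 2 := by
  refine Summable.of_nonneg_of_le (fun n => sq_nonneg _) (fun n => ?_)
    ((ell2_summable f).mul_left (‖U‖ ^ 2))
  rw [mul_pow]
  gcongr ?_ * _
  exact sq_le_sq' (by linarith [neg_abs_le (U n), U.norm_coe_le_norm n, Real.norm_eq_abs (U n)])
    (by linarith [le_abs_self (U n), U.norm_coe_le_norm n, Real.norm_eq_abs (U n)])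

lemma ell2_norm_mul (U : ℤ →ᵇ ℝ) (f : Ell2) :
    ‖ell2Mk (fun n => U n * f n) (ell2_summable_mul U f)‖ ≤ ‖U‖ * ‖f‖ := by
  have : ‖U‖ * ‖f‖ = ‖‖U‖ • f‖ := by rw [norm_smul, norm_norm]
  rw [this]
  refine ell2_norm_le fun n => ?_
  simp only [ell2Mk_apply, lp.coeFn_smul, Pi.smul_apply, smul_eq_mul, abs_mul, abs_norm]
  gcongr
  exact U.norm_coe_le_norm n

/-- Multiplication by a bounded sequence. -/
def mulOp (U : ℤ →ᵇ ℝ) : Ell2 →L[ℝ] Ell2 :=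
  LinearMap.mkContinuous
    { toFun := fun f => ell2Mk (fun n => U n * f n) (ell2_summable_mul U f)
      map_add' := fun f g => ell2_ext fun n => by simp [mul_add]
      map_smul' := fun c f => ell2_ext fun n => by simp; ring }
    ‖U‖ (ell2_norm_mul U)

@[simp] lemma mulOp_apply (U : ℤ →ᵇ ℝ) (f : Ell2) (n : ℤ) : mulOp U f n = U n * f n := rfl

lemma mulOp_norm_le (U : ℤ →ᵇ ℝ) (f : Ell2) : ‖mulOp U f‖ ≤ ‖U‖ * ‖f‖ := ell2_norm_mul U f

/-- `H_U - E` as a bounded operator on `ℓ²(ℤ)`. -/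
def schr (U : ℤ →ᵇ ℝ) (E : ℝ) : Ell2 →L[ℝ] Ell2 :=
  (shiftOp (-1)).toContinuousLinearMap + (shiftOp 1).toContinuousLinearMap + mulOp U
    - E • ContinuousLinearMap.id ℝ Ell2

lemma schr_apply (U : ℤ →ᵇ ℝ) (E : ℝ) (f : Ell2) (n : ℤ) :
    schr U E f n = f (n - 1) + f (n + 1) + (U n - E) * f n := by
  have e : schr U E f n = f (n + -1) + f (n + 1) + U n * f n - E * f n := rfl
  rw [e, ← sub_eq_add_neg]; ring

lemma schr_sub (U : ℤ →ᵇ ℝ) (E t : ℝ) (f : Ell2) :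
    schr U (E + t) f = schr U E f - t • f := by
  apply ell2_ext; intro n
  simp only [schr_apply, ell2_sub_apply, ell2_smul_apply]; ring

lemma schr_pot (U U' : ℤ →ᵇ ℝ) (E : ℝ) (f : Ell2) :
    schr U' E f = schr U E f + mulOp (U' - U) f := by
  apply ell2_ext; intro n
  simp only [schr_apply, ell2_add_apply, mulOp_apply, BoundedContinuousFunction.coe_sub,
    Pi.sub_apply]; ring

lemma shiftOp_inner (a : ℤ) (f g : Ell2) : ⟪shiftOp a f, g⟫_ℝ = ⟪f, shiftOp (-a) g⟫_ℝ := by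
  rw [lp.inner_eq_tsum, lp.inner_eq_tsum,
    ← (Equiv.addRight a).tsum_eq (fun n => ⟪f n, shiftOp (-a) g n⟫_ℝ)]
  simp

lemma schr_symm (U : ℤ →ᵇ ℝ) (E : ℝ) (f g : Ell2) :
    ⟪schr U E f, g⟫_ℝ = ⟪f, schr U E g⟫_ℝ := by
  have hm : ⟪mulOp U f, g⟫_ℝ = ⟪f, mulOp U g⟫_ℝ := by
    rw [lp.inner_eq_tsum, lp.inner_eq_tsum]
    congr 1; ext n
    simp; ring
  have e : ∀ h, schr U E h = shiftOp (-1) h + shiftOp 1 h + mulOp U h - E • h := fun h => rfl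
  rw [e, e]
  simp only [inner_add_left, inner_add_right, inner_sub_left, inner_sub_right, shiftOp_inner, hm,
    inner_smul_left, inner_smul_right, neg_neg]
  simp; ring

/-! ### Operators bounded below -/

/-- `T` is bounded below: `c‖x‖ ≤ ‖T x‖` for some `c > 0`. For symmetric `T` this is
bounded invertibility. -/
def BddBelow' {X : Type*} [NormedAddCommGroup X] (T : X → X) : Prop :=
  ∃ c : ℝ, 0 < c ∧ ∀ x, c * ‖x‖ ≤ ‖T x‖

section Hilbert
variable {X : Type*} [NormedAddCommGroup X] [InnerProductSpace ℝ X]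

/-- A symmetric operator that is nonnegative and bounded below is strictly positive. -/
lemma pos_of_bddBelow (Q : X →L[ℝ] X) (hs : ∀ x y, ⟪Q x, y⟫_ℝ = ⟪x, Q y⟫_ℝ)
    (hp : ∀ x, 0 ≤ ⟪Q x, x⟫_ℝ) (hb : BddBelow' Q) :
    ∃ d : ℝ, 0 < d ∧ ∀ x, d * ‖x‖ ^ 2 ≤ ⟪Q x, x⟫_ℝ := by
  obtain ⟨c, hc, hb⟩ := hb
  have hK : 0 < ‖Q‖ + 1 := by positivity
  refine ⟨c ^ 2 / (‖Q‖ + 1), by positivity, fun x => ?_⟩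
  -- Cauchy-Schwarz for the form of `Q`: evaluate it at `x - Q x / K` with `K ≥ ‖Q‖`.
  have h := hp (x - (1 / (‖Q‖ + 1)) • Q x)
  have h2 : ⟪Q (Q x), Q x⟫_ℝ ≤ (‖Q‖ + 1) * ‖Q x‖ ^ 2 := by
    calc ⟪Q (Q x), Q x⟫_ℝ ≤ ‖Q (Q x)‖ * ‖Q x‖ := real_inner_le_norm _ _
      _ ≤ (‖Q‖ * ‖Q x‖) * ‖Q x‖ := by gcongr; exact Q.le_opNorm _
      _ ≤ _ := by nlinarith [sq_nonneg ‖Q x‖]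
  have h3 : ⟪Q (Q x), x⟫_ℝ = ‖Q x‖ ^ 2 := by rw [hs, real_inner_self_eq_norm_sq]
  simp only [map_sub, map_smul, inner_sub_left, inner_sub_right, inner_smul_left,
    inner_smul_right, h3, real_inner_self_eq_norm_sq] at h
  simp only [RCLike.conj_to_real] at h
  have h4 : (c * ‖x‖) ^ 2 ≤ ‖Q x‖ ^ 2 := by
    have := hb x
    gcongr
  set K := ‖Q‖ + 1
  have h5 : 1 / K * (1 / K * ⟪Q (Q x), Q x⟫_ℝ) ≤ 1 / K * ‖Q x‖ ^ 2 := by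
    gcongr
    rw [div_mul_eq_mul_div, one_mul, div_le_iff₀ hK]; linarith
  have h6 : 1 / K * ‖Q x‖ ^ 2 ≤ ⟪Q x, x⟫_ℝ := by linarith
  calc c ^ 2 / K * ‖x‖ ^ 2 = 1 / K * (c * ‖x‖) ^ 2 := by ring
    _ ≤ 1 / K * ‖Q x‖ ^ 2 := by gcongr
    _ ≤ _ := h6

/-- If `B - t` is bounded below for all `|t| < r`, then `r‖x‖ ≤ ‖B x‖`: for symmetric
operators the norm of the resolvent is the inverse distance to the spectrum. -/
lemma norm_ge_of_resolvent (B : X →L[ℝ] X) (hs : ∀ x y, ⟪B x, y⟫_ℝ = ⟪x, B y⟫_ℝ)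
    {r : ℝ} (hr : 0 < r)
    (h : ∀ t, |t| < r → BddBelow' (fun x => B x - t • x)) (x : X) :
    r * ‖x‖ ≤ ‖B x‖ := by
  set S : Set ℝ := {s | 0 ≤ s ∧ s ≤ r ^ 2 ∧ ∀ x, s * ‖x‖ ^ 2 ≤ ‖B x‖ ^ 2} with hS
  have h0 : (0 : ℝ) ∈ S := ⟨le_rfl, by positivity, fun x => by simp⟩
  have hbdd : BddAbove S := ⟨r ^ 2, fun s hs => hs.2.1⟩
  set s := sSup S
  have hs0 : 0 ≤ s := le_csSup hbdd h0
  have hsr : s ≤ r ^ 2 := csSup_le ⟨0, h0⟩ fun s hs => hs.2.1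
  have hsB : ∀ x, s * ‖x‖ ^ 2 ≤ ‖B x‖ ^ 2 := by
    intro x
    by_cases hx : ‖x‖ = 0
    · simp [hx]
    have hx' : 0 < ‖x‖ ^ 2 := by positivity
    rw [← le_div_iff₀ hx']
    refine csSup_le ⟨0, h0⟩ fun s hs => ?_
    rw [le_div_iff₀ hx']; exact hs.2.2 x
  rcases eq_or_lt_of_le hsr with heq | hlt
  · have := hsB x
    rw [heq, ← mul_pow] at this
    exact (sq_le_sq₀ (by positivity) (norm_nonneg _)).1 this
  exfalso
  have hq : √s < r := by
    rw [Real.sqrt_lt' hr]; exact hlt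
  let Q : X →L[ℝ] X := B.comp B - s • ContinuousLinearMap.id ℝ X
  have hQ : ∀ x, Q x = B (B x) - s • x := fun x => rfl
  have hin : ∀ x, ⟪Q x, x⟫_ℝ = ‖B x‖ ^ 2 - s * ‖x‖ ^ 2 := by
    intro x
    rw [hQ, inner_sub_left, hs, real_inner_self_eq_norm_sq, inner_smul_left,
      real_inner_self_eq_norm_sq]; simp
  obtain ⟨d, hd, hd'⟩ := pos_of_bddBelow Q
    (fun x y => by simp only [hQ, inner_sub_left, inner_sub_right, hs, inner_smul_left,
      inner_smul_right]; simp)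
    (fun x => by rw [hin]; linarith [hsB x])
    (by
      obtain ⟨c, hc, hc'⟩ := h (√s) (by rw [abs_of_nonneg (Real.sqrt_nonneg s)]; exact hq)
      obtain ⟨e, he, he'⟩ := h (-√s) (by
        rw [abs_neg, abs_of_nonneg (Real.sqrt_nonneg s)]; exact hq)
      refine ⟨e * c, by positivity, fun x => ?_⟩
      have : Q x = B (B x - √s • x) - (-√s) • (B x - √s • x) := by
        rw [hQ, map_sub, map_smul, neg_smul, smul_sub, smul_smul, Real.mul_self_sqrt hs0]
        abel
      rw [this]
      calc e * c * ‖x‖ = e * (c * ‖x‖) := by ring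
        _ ≤ e * ‖B x - √s • x‖ := by gcongr; exact hc' x
        _ ≤ _ := he' _)
  have hmem : min (r ^ 2) (s + d) ∈ S := by
    refine ⟨by positivity, min_le_left _ _, fun x => ?_⟩
    have h1 := hd' x
    rw [hin] at h1
    have : min (r ^ 2) (s + d) * ‖x‖ ^ 2 ≤ (s + d) * ‖x‖ ^ 2 := by gcongr; exact min_le_right _ _
    linarith
  have := le_csSup hbdd hmem
  have h7 : s < min (r ^ 2) (s + d) := lt_min hlt (by linarith)
  exact absurd this (not_le.2 h7)

end Hilbert

/-! ### The spectrum -/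

lemma notMem_spectrum_iff (U : ℤ →ᵇ ℝ) (E : ℝ) :
    E ∉ SchrodingerSpectrum U ↔ BddBelow' (schr U E) := by
  simp only [SchrodingerSpectrum, Set.mem_ofPred_eq, not_not]
  constructor
  · rintro ⟨T, hT⟩
    have hTe : ∀ f, T f = schr U E f := fun f => ell2_ext fun n => by rw [hT, schr_apply]
    have hk : (schr U E).ker = ⊥ := by
      rw [LinearMap.ker_eq_bot]
      intro f g hfg
      exact T.injective (by rw [hTe, hTe]; exact hfg)
    have hr : (schr U E).range = ⊤ := by
      rw [LinearMap.range_eq_top]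
      intro g
      obtain ⟨f, hf⟩ := T.surjective g
      exact ⟨f, by rw [← hf, hTe]; rfl⟩
    let e := ContinuousLinearEquiv.ofBijective (schr U E) hk hr
    have he : ∀ f, e f = schr U E f := fun f => rfl
    refine ⟨(‖(e.symm : Ell2 →L[ℝ] Ell2)‖ + 1)⁻¹, by positivity, fun f => ?_⟩
    rw [inv_mul_le_iff₀ (by positivity)]
    have h1 := (e.symm : Ell2 →L[ℝ] Ell2).le_opNorm (schr U E f)
    have h2 : (e.symm : Ell2 →L[ℝ] Ell2) (schr U E f) = f := by
      rw [← he]; simp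
    rw [h2] at h1
    nlinarith [norm_nonneg (schr U E f)]
  · rintro ⟨c, hc, h⟩
    have hanti : AntilipschitzWith (⟨c⁻¹, by positivity⟩ : NNReal) (schr U E) := by
      apply AddMonoidHomClass.antilipschitz_of_bound
      intro f
      show ‖f‖ ≤ c⁻¹ * _
      rw [le_inv_mul_iff₀ hc]; exact h f
    have hclosed : IsClosed ((schr U E).range : Set Ell2) := by
      have := hanti.isClosed_range (schr U E).uniformContinuous
      rwa [← ContinuousLinearMap.coe_coe, ← LinearMap.coe_range] at this
    have hsa : IsSelfAdjoint (schr U E) := by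
      rw [ContinuousLinearMap.isSelfAdjoint_iff_isSymmetric]
      intro f g; exact schr_symm U E f g
    have htop : (schr U E).range = ⊤ := by
      have h1 := (schr U E).orthogonal_range
      rw [← ContinuousLinearMap.star_eq_adjoint, hsa.star_eq] at h1
      have h2 : (schr U E).ker = ⊥ := LinearMap.ker_eq_bot.2 hanti.injective
      rw [h2] at h1
      have : CompleteSpace (schr U E).range := hclosed.completeSpace_coe
      exact (Submodule.orthogonal_eq_bot_iff).1 h1
    refine ⟨LinearEquiv.ofBijective (schr U E).toLinearMap
      ⟨hanti.injective, LinearMap.range_eq_top.1 htop⟩, fun f n => ?_⟩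
    exact schr_apply U E f n

lemma bddBelow_pert {U U' : ℤ →ᵇ ℝ} {E E' c : ℝ} (h : ∀ f, c * ‖f‖ ≤ ‖schr U E f‖) (f : Ell2) :
    (c - |E' - E| - ‖U' - U‖) * ‖f‖ ≤ ‖schr U' E' f‖ := by
  have e : schr U' E' f = schr U E f - (E' - E) • f + mulOp (U' - U) f := by
    rw [schr_pot U U', ← schr_sub, add_sub_cancel]
  have h1 : ‖schr U E f‖ ≤ ‖schr U' E' f‖ + |E' - E| * ‖f‖ + ‖U' - U‖ * ‖f‖ := by
    have : schr U E f = schr U' E' f + (E' - E) • f - mulOp (U' - U) f := by rw [e]; abel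
    rw [this]
    refine (norm_sub_le _ _).trans (add_le_add ((norm_add_le _ _).trans ?_) (mulOp_norm_le _ _))
    rw [norm_smul, Real.norm_eq_abs]
  nlinarith [h f]

/-- If the spectrum avoids `(E - r, E + r)`, then `r` is a lower bound for `H_U - E`. -/
lemma schr_norm_ge {U : ℤ →ᵇ ℝ} {E r : ℝ} (hr : 0 < r)
    (h : ∀ t, |t| < r → E + t ∉ SchrodingerSpectrum U) (f : Ell2) :
    r * ‖f‖ ≤ ‖schr U E f‖ := by
  refine norm_ge_of_resolvent (schr U E) (schr_symm U E) hr (fun t ht => ?_) f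
  have := (notMem_spectrum_iff U (E + t)).1 (h t ht)
  rwa [show (⇑(schr U (E + t))) = fun x => schr U E x - t • x from funext (schr_sub U E t)] at this

/-- Spectra vary at most as much as the potential. -/
lemma spectrum_near {U U' : ℤ →ᵇ ℝ} {E r : ℝ} (hU : ‖U' - U‖ < r)
    (hE : E ∈ SchrodingerSpectrum U') : ∃ E' ∈ SchrodingerSpectrum U, |E' - E| < r := by
  by_contra! hcon
  have hr : 0 < r := (norm_nonneg _).trans_lt hU
  have h1 := schr_norm_ge (U := U) (E := E) hr (fun t ht hm => by
    have := hcon _ hm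
    rw [add_sub_cancel_left] at this; linarith)
  refine (notMem_spectrum_iff U' E).2 ⟨r - ‖U' - U‖, by linarith, fun f => ?_⟩ hE
  simpa using bddBelow_pert (U' := U') (E' := E) h1 f

lemma schr_norm_le (U : ℤ →ᵇ ℝ) (f : Ell2) : ‖schr U 0 f‖ ≤ (2 + ‖U‖) * ‖f‖ := by
  have e : schr U 0 f = shiftOp (-1) f + shiftOp 1 f + mulOp U f := by
    apply ell2_ext; intro n; simp [schr_apply, sub_eq_add_neg]
  rw [e]
  have := mulOp_norm_le U f
  calc _ ≤ ‖shiftOp (-1) f‖ + ‖shiftOp 1 f‖ + ‖mulOp U f‖ := norm_add₃_le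
    _ ≤ _ := by rw [LinearIsometry.norm_map, LinearIsometry.norm_map]; linarith

lemma spectrum_bound {U : ℤ →ᵇ ℝ} {E : ℝ} (hE : E ∈ SchrodingerSpectrum U) : |E| ≤ 2 + ‖U‖ := by
  by_contra! h
  refine (notMem_spectrum_iff U E).2 ⟨|E| - (2 + ‖U‖), by linarith, fun f => ?_⟩ hE
  have h1 := schr_sub U 0 E f
  rw [zero_add] at h1
  have h2 : ‖E • f‖ ≤ ‖schr U E f‖ + ‖schr U 0 f‖ := by
    have : E • f = schr U 0 f - schr U E f := by rw [h1]; abel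
    rw [this, add_comm]; exact norm_sub_le _ _
  rw [norm_smul, Real.norm_eq_abs] at h2
  linarith [schr_norm_le U f]

lemma spectrum_isClosed (U : ℤ →ᵇ ℝ) : IsClosed (SchrodingerSpectrum U) := by
  rw [← isOpen_compl_iff, Metric.isOpen_iff]
  intro E hE
  obtain ⟨c, hc, h⟩ := (notMem_spectrum_iff U E).1 hE
  refine ⟨c, hc, fun E' hE' => ?_⟩
  rw [Metric.mem_ball, Real.dist_eq] at hE'
  exact (notMem_spectrum_iff U E').2 ⟨c - |E' - E|, by linarith, fun f => by
    simpa using bddBelow_pert (U' := U) (E' := E') h f⟩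

lemma spectrum_isCompact (U : ℤ →ᵇ ℝ) : IsCompact (SchrodingerSpectrum U) :=
  Metric.isCompact_of_isClosed_isBounded (spectrum_isClosed U)
    ((Metric.isBounded_closedBall (x := (0 : ℝ)) (r := 2 + ‖U‖)).subset fun E hE => by
      simpa using spectrum_bound hE)

lemma spectrum_nonempty (U : ℤ →ᵇ ℝ) : (SchrodingerSpectrum U).Nonempty := by
  by_contra h
  rw [Set.not_nonempty_iff_eq_empty] at h
  have h1 := schr_norm_ge (U := U) (E := 0) (r := 3 + ‖U‖) (by positivity)
    (fun t _ => by simp [h]) (lp.single 2 0 1)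
  have h2 := schr_norm_le U (lp.single 2 0 1)
  have h3 : ‖(lp.single 2 (0 : ℤ) (1 : ℝ) : Ell2)‖ = 1 := by
    rw [lp.norm_single (by norm_num)]; simp
  rw [h3] at h1 h2
  linarith

/-! ### No isolated points -/

/-- An element of the kernel of `H_U - E` solves a second-order recursion. -/
lemma ker_eq_zero {U : ℤ →ᵇ ℝ} {E : ℝ} {f : Ell2} (hf : schr U E f = 0)
    (h0 : f 0 = 0) (h1 : f 1 = 0) : f = 0 := by
  have hrec : ∀ n, f (n - 1) + f (n + 1) + (U n - E) * f n = 0 := fun n => by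
    rw [← schr_apply, hf]; rfl
  have key : ∀ n : ℤ, f n = 0 ∧ f (n + 1) = 0 := by
    intro n
    induction n with
    | zero => exact ⟨h0, h1⟩
    | succ n ih =>
      refine ⟨ih.2, ?_⟩
      have := hrec (n + 1)
      rw [add_sub_cancel_right, ih.1, ih.2] at this
      simpa using this
    | pred n ih =>
      rw [sub_add_cancel]
      refine ⟨?_, ih.1⟩
      have := hrec (-n)
      rw [ih.1, ih.2] at this
      simpa using this
  exact ell2_ext fun n => (key n).1

/-- Around an isolated spectral value, `H_U - E` is bounded below on its range. -/
lemma norm_sq_ge_of_isolated {U : ℤ →ᵇ ℝ} {E r : ℝ} (hr : 0 < r)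
    (h : ∀ t, t ≠ 0 → |t| < r → E + t ∉ SchrodingerSpectrum U) (f : Ell2) :
    r * ‖schr U E f‖ ≤ ‖schr U E (schr U E f)‖ := by
  set A := schr U E
  -- `A² - s` with `s = r²/2` has spectrum outside `(-s, s)`.
  set s := r ^ 2 / 2 with hsdef
  have hs : 0 < s := by positivity
  let B : Ell2 →L[ℝ] Ell2 := A.comp A - s • ContinuousLinearMap.id ℝ Ell2
  have hB : ∀ x, B x = A (A x) - s • x := fun x => rfl
  have hA : ∀ x y, ⟪A x, y⟫_ℝ = ⟪x, A y⟫_ℝ := schr_symm U E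
  have hbb : ∀ t, t ≠ 0 → |t| < r → BddBelow' (fun x => A x - t • x) := by
    intro t ht ht'
    have := (notMem_spectrum_iff U (E + t)).1 (h t ht ht')
    rwa [show (⇑(schr U (E + t))) = fun x => schr U E x - t • x from funext (schr_sub U E t)]
      at this
  have key := norm_ge_of_resolvent B (fun x y => by
    simp only [hB, inner_sub_left, inner_sub_right, hA, inner_smul_left, inner_smul_right]; simp)
    hs (fun t ht => by
      rw [abs_lt] at ht
      have hp : 0 < s + t := by linarith
      have hq : 0 < √(s + t) := Real.sqrt_pos.2 hp
      have hq' : √(s + t) < r := by rw [Real.sqrt_lt' hr]; linarith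
      obtain ⟨c, hc, hc'⟩ := hbb (√(s + t)) hq.ne' (by rwa [abs_of_pos hq])
      obtain ⟨e, he, he'⟩ := hbb (-√(s + t)) (by linarith [hq]) (by rwa [abs_neg, abs_of_pos hq])
      refine ⟨e * c, by positivity, fun x => ?_⟩
      have : B x - t • x = A (A x - √(s + t) • x) - (-√(s + t)) • (A x - √(s + t) • x) := by
        rw [hB, map_sub, map_smul, neg_smul, smul_sub, smul_smul, Real.mul_self_sqrt hp.le,
          add_smul]
        abel
      beta_reduce
      rw [this]
      calc e * c * ‖x‖ = e * (c * ‖x‖) := by ring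
        _ ≤ e * ‖A x - √(s + t) • x‖ := by gcongr; exact hc' x
        _ ≤ _ := he' _) f
  rw [hB] at key
  have h1 : (s * ‖f‖) ^ 2 ≤ ‖A (A f) - s • f‖ ^ 2 := by gcongr
  rw [norm_sub_sq_real, inner_smul_right, hA, real_inner_self_eq_norm_sq, norm_smul,
    Real.norm_eq_abs, abs_of_pos hs] at h1
  rw [← sq_le_sq₀ (by positivity) (by positivity), mul_pow]
  have : r ^ 2 = 2 * s := by rw [hsdef]; ring
  rw [this]; nlinarith

/-- Distance to the eigenspace of an isolated spectral value is controlled by the residual. -/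
lemma exists_near_ker {U : ℤ →ᵇ ℝ} {E r : ℝ} (hr : 0 < r)
    (h : ∀ t, t ≠ 0 → |t| < r → E + t ∉ SchrodingerSpectrum U) (g : Ell2) :
    ∃ p, schr U E p = 0 ∧ r * ‖g - p‖ ≤ ‖schr U E g‖ := by
  set A := schr U E with hAdef
  have hsa : IsSelfAdjoint A := by
    rw [ContinuousLinearMap.isSelfAdjoint_iff_isSymmetric]
    intro f g; exact schr_symm U E f g
  have hc : CompleteSpace A.ker := A.isClosed_ker.completeSpace_coe
  obtain ⟨p, hp, z, hz, hgz⟩ := (A.ker).exists_add_mem_mem_orthogonal g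
  have hz2 : r * ‖z‖ ≤ ‖A z‖ := by
    have h1 := A.orthogonal_ker
    rw [← ContinuousLinearMap.star_eq_adjoint, hsa.star_eq] at h1
    rw [h1] at hz
    have hz' : z ∈ closure (A.range : Set Ell2) := hz
    have hcl : IsClosed {z : Ell2 | r * ‖z‖ ≤ ‖A z‖} :=
      isClosed_le (by fun_prop) (by fun_prop)
    refine closure_minimal ?_ hcl hz'
    rintro _ ⟨f, rfl⟩
    exact norm_sq_ge_of_isolated hr h f
  have hp0 : A p = 0 := hp
  refine ⟨p, hp0, ?_⟩
  rw [hgz, add_sub_cancel_left, map_add, hp0, zero_add]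
  exact hz2

/-- Almost periods of arbitrary quality; holds for limit-periodic sequences. -/
def HasPeriods (U : ℤ → ℝ) : Prop :=
  ∀ ε > 0, ∃ q : ℕ, 0 < q ∧ ∀ n i : ℤ, |U (n + i * q) - U n| ≤ ε

lemma ell2_tendsto (f : Ell2) : Filter.Tendsto (fun n => f n) Filter.cofinite (nhds 0) := by
  have h := (ell2_summable f).tendsto_cofinite_zero
  have h2 := (Real.continuous_sqrt.tendsto 0).comp h
  rw [Real.sqrt_zero] at h2
  rw [tendsto_zero_iff_abs_tendsto_zero]
  refine h2.congr fun n => ?_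
  simp [Real.sqrt_sq_eq_abs]

/-- An isolated spectral value would be an eigenvalue of finite multiplicity, but
translates of an eigenvector by almost periods are almost eigenvectors that run off to
infinity. -/
lemma spectrum_preperfect (U : ℤ →ᵇ ℝ) (hU : HasPeriods U) :
    Preperfect (SchrodingerSpectrum U) := by
  intro E hE
  rw [accPt_iff_nhds]
  by_contra! hcon
  obtain ⟨S, hS, hcon⟩ := hcon
  obtain ⟨r, hr, hrS⟩ := Metric.mem_nhds_iff.1 hS
  have h : ∀ t, t ≠ 0 → |t| < r → E + t ∉ SchrodingerSpectrum U := by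
    intro t ht htr hm
    have := hcon (E + t) ⟨hrS (by simpa [Real.dist_eq] using htr), hm⟩
    exact ht (by linarith)
  set A := schr U E with hA
  -- evaluation at `0` and `1` is injective on the eigenspace
  let ev : A.ker →ₗ[ℝ] ℝ × ℝ :=
    { toFun := fun f => ((f : Ell2) 0, (f : Ell2) 1)
      map_add' := fun f g => rfl
      map_smul' := fun c f => rfl }
  have hev : Function.Injective ev := by
    rw [injective_iff_map_eq_zero]
    intro f hf
    have h0 : (f : Ell2) 0 = 0 := congrArg Prod.fst hf
    have h1 : (f : Ell2) 1 = 0 := congrArg Prod.snd hf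
    exact Subtype.ext (ker_eq_zero f.2 h0 h1)
  have : FiniteDimensional ℝ A.ker := FiniteDimensional.of_injective ev hev
  obtain ⟨C, hC, hC'⟩ := LinearMap.exists_antilipschitzWith ev (LinearMap.ker_eq_bot.2 hev)
  have hC0 : (0 : ℝ) < C := hC
  have hCb : ∀ p, A p = 0 → ‖p‖ ≤ C * (|p 0| + |p 1|) := by
    intro p hp
    have := hC'.le_mul_dist ⟨p, hp⟩ 0
    rw [dist_zero_right, map_zero, dist_zero_right] at this
    refine (this : ‖p‖ ≤ _).trans ?_
    gcongr
    rw [Prod.norm_def]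
    refine max_le ?_ ?_
    · exact le_add_of_nonneg_right (abs_nonneg _)
    · exact le_add_of_nonneg_left (abs_nonneg _)
  obtain ⟨f, hf, hf1⟩ : ∃ f, A f = 0 ∧ ‖f‖ = 1 := by
    by_contra! hno
    have hno' : ∀ p, A p = 0 → p = 0 := by
      intro p hp
      by_contra hp0
      refine hno (‖p‖⁻¹ • p) (by rw [map_smul, hp, smul_zero]) ?_
      rw [norm_smul, norm_inv, norm_norm, inv_mul_cancel₀ (norm_ne_zero_iff.2 hp0)]
    refine (notMem_spectrum_iff U E).2 ⟨r, hr, fun g => ?_⟩ hE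
    obtain ⟨p, hp, hpg⟩ := exists_near_ker hr h g
    rw [hno' p hp, sub_zero] at hpg
    exact hpg
  set δ : ℝ := 1 / (8 * (C + 1)) with hδ
  have hδ0 : 0 < δ := by positivity
  obtain ⟨q, hq, hper⟩ := hU (r * δ) (by positivity)
  -- far translates are small at `0` and `1`
  obtain ⟨i, hi0, hi1⟩ : ∃ i : ℕ, |f (0 + i * q)| < δ ∧ |f (1 + i * q)| < δ := by
    have ht : ∀ a : ℤ, Filter.Tendsto (fun i : ℕ => f (a + i * q)) Filter.atTop (nhds 0) := by
      intro a
      refine (ell2_tendsto f).comp ?_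
      rw [← Nat.cofinite_eq_atTop]
      apply Function.Injective.tendsto_cofinite
      intro i j hij
      have : (i : ℤ) * q = j * q := add_left_cancel hij
      exact_mod_cast mul_right_cancel₀ (by exact_mod_cast hq.ne') this
    have e0 := (ht 0).abs.eventually_lt_const (u := δ) (by simpa using hδ0)
    have e1 := (ht 1).abs.eventually_lt_const (u := δ) (by simpa using hδ0)
    exact (e0.and e1).exists
  set g := shiftOp (i * q) f
  have hg1 : ‖g‖ = 1 := by rw [LinearIsometry.norm_map, hf1]
  have hAg : ‖A g‖ ≤ r * δ := by
    have : r * δ = ‖(r * δ) • g‖ := by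
      rw [norm_smul, hg1, mul_one, Real.norm_of_nonneg (by positivity)]
    rw [this]
    refine ell2_norm_le fun n => ?_
    have e1 : A f (n + i * q) = 0 := by rw [hf]; rfl
    rw [hA, schr_apply] at e1
    have e2 : A g n = (U n - U (n + i * q)) * f (n + i * q) := by
      rw [hA, schr_apply]
      simp only [g, shiftOp_apply]
      rw [show n - 1 + (i : ℤ) * q = n + i * q - 1 by ring,
        show n + 1 + (i : ℤ) * q = n + i * q + 1 by ring]
      linarith
    rw [e2, ell2_smul_apply, abs_mul, abs_mul, abs_of_pos (show 0 < r * δ by positivity), abs_sub_comm]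
    exact mul_le_mul_of_nonneg_right (hper n i) (abs_nonneg _)
  obtain ⟨p, hp, hpg⟩ := exists_near_ker hr h g
  have hgp : ‖g - p‖ ≤ δ := le_of_mul_le_mul_left (hpg.trans hAg) hr
  have hpt : ∀ n, |p n| ≤ |g n| + δ := by
    intro n
    have h1 : |(g - p) n| ≤ δ := (lp.norm_apply_le_norm (by norm_num) (g - p) n).trans hgp
    rw [ell2_sub_apply, abs_sub_comm] at h1
    linarith [abs_sub_abs_le_abs_sub (p n) (g n)]
  have hp1 : 1 - δ ≤ ‖p‖ := by
    have := norm_sub_norm_le g p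
    linarith
  have hfin := hCb p hp
  have b0 := hpt 0
  have b1 := hpt 1
  have g0 : |g 0| < δ := hi0
  have g1 : |g 1| < δ := hi1
  have : (C : ℝ) * (|p 0| + |p 1|) ≤ C * (4 * δ) := by gcongr; linarith
  have hd : δ * (8 * (C + 1)) = 1 := by rw [hδ]; field_simp
  nlinarith

/-! ### Transfer matrices -/

/-- The one-step transfer matrix at energy `E` and potential value `v`. -/
def stepMat (E v : ℝ) : Matrix (Fin 2) (Fin 2) ℝ := !![E - v, -1; 1, 0]

/-- The transfer matrix from site `n` to site `n + l`. -/
def transMat (E : ℝ) (U : ℤ → ℝ) (n : ℤ) : ℕ → Matrix (Fin 2) (Fin 2) ℝ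
  | 0 => 1
  | l + 1 => stepMat E (U (n + l)) * transMat E U n l

lemma transMat_det (E : ℝ) (U : ℤ → ℝ) (n : ℤ) (l : ℕ) : (transMat E U n l).det = 1 := by
  induction l with
  | zero => simp [transMat]
  | succ l ih => rw [transMat, Matrix.det_mul, ih]; simp [stepMat, Matrix.det_fin_two]

lemma transMat_congr {E : ℝ} {U U' : ℤ → ℝ} {n n' : ℤ} {l : ℕ}
    (h : ∀ j : ℕ, j < l → U (n + j) = U' (n' + j)) : transMat E U n l = transMat E U' n' l := by
  induction l with
  | zero => rfl
  | succ l ih =>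
    rw [transMat, transMat, ih fun j hj => h j (by omega), h l (by omega)]

lemma transMat_add (E : ℝ) (U : ℤ → ℝ) (n : ℤ) (a b : ℕ) :
    transMat E U n (a + b) = transMat E U (n + a) b * transMat E U n a := by
  induction b with
  | zero => simp [transMat]
  | succ b ih =>
    rw [← add_assoc, transMat, ih, transMat, Matrix.mul_assoc]
    push_cast
    rw [add_assoc]

lemma transMat_succ' (E : ℝ) (U : ℤ → ℝ) (n : ℤ) (l : ℕ) :
    transMat E U n (l + 1) = transMat E U (n + 1) l * stepMat E (U n) := by
  rw [add_comm l 1, transMat_add]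
  simp [transMat]

lemma transMat_trace {E : ℝ} {U : ℤ → ℝ} {q : ℕ} (hU : ∀ n, U (n + q) = U n)
    (n : ℤ) : (transMat E U n q).trace = (transMat E U 0 q).trace := by
  have step : ∀ n, (transMat E U (n + 1) q).trace = (transMat E U n q).trace := by
    intro n
    cases q with
    | zero => simp [transMat]
    | succ q =>
      rw [transMat_succ' E U n, transMat, Matrix.trace_mul_comm]
      have := hU n
      push_cast at this
      rw [show n + 1 + (q : ℤ) = n + (q + 1) by ring, this]
  induction n with
  | zero => rfl
  | succ n ih => rw [step, ih]
  | pred n ih => rw [← ih, ← step (-n - 1), sub_add_cancel]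

/-- Transfer matrices propagate any `f ∈ ℓ²(ℤ)` up to an error controlled by `(H_U - E) f`. -/
lemma transMat_approx (E : ℝ) (U : ℤ →ᵇ ℝ) (l : ℕ) :
    ∃ C : ℝ, 0 ≤ C ∧ ∀ (f : Ell2) (n : ℤ),
      |f (n + l) - (transMat E U n l 0 0 * f n + transMat E U n l 0 1 * f (n - 1))|
        ≤ C * ∑ j ∈ Finset.range l, |schr U E f (n + j)| ∧
      |f (n + l - 1) - (transMat E U n l 1 0 * f n + transMat E U n l 1 1 * f (n - 1))|
        ≤ C * ∑ j ∈ Finset.range l, |schr U E f (n + j)| := by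
  induction l with
  | zero => exact ⟨0, le_rfl, fun f n => by simp [transMat]⟩
  | succ l ih =>
    obtain ⟨C, hC, ih⟩ := ih
    refine ⟨1 + (|E| + ‖U‖ + 1) * C, by positivity, fun f n => ?_⟩
    obtain ⟨h0, h1⟩ := ih f n
    rw [Finset.sum_range_succ]
    set S := ∑ j ∈ Finset.range l, |schr U E f (n + j)| with hS
    have hS0 : 0 ≤ S := Finset.sum_nonneg fun _ _ => abs_nonneg _
    have hg := schr_apply U E f (n + l)
    set g := schr U E f (n + l)
    have hU : |E - U (n + l)| ≤ |E| + ‖U‖ :=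
      (abs_sub _ _).trans (by gcongr; exact U.norm_coe_le_norm _)
    have e1 : (n : ℤ) + ((l + 1 : ℕ) : ℤ) = n + l + 1 := by push_cast; ring
    have e00 : ∀ j, transMat E U n (l + 1) 0 j =
        (E - U (n + l)) * transMat E U n l 0 j - transMat E U n l 1 j := by
      intro j
      simp [transMat, stepMat, Matrix.mul_apply, Fin.sum_univ_two]; ring
    have e10 : ∀ j, transMat E U n (l + 1) 1 j = transMat E U n l 0 j := by
      intro j
      simp [transMat, stepMat, Matrix.mul_apply, Fin.sum_univ_two]
    rw [e1, add_sub_cancel_right, e00, e00, e10, e10]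
    set d0 := f (n + l) - (transMat E U n l 0 0 * f n + transMat E U n l 0 1 * f (n - 1))
    set d1 := f (n + l - 1) - (transMat E U n l 1 0 * f n + transMat E U n l 1 1 * f (n - 1))
    have hK : 0 ≤ |E| + ‖U‖ := by positivity
    constructor
    · have : f (n + l + 1) - (((E - U (n + l)) * transMat E U n l 0 0 - transMat E U n l 1 0) * f n
          + ((E - U (n + l)) * transMat E U n l 0 1 - transMat E U n l 1 1) * f (n - 1))
          = g + (E - U (n + l)) * d0 - d1 := by
        rw [hg]; simp only [d0, d1]; ring
      rw [this]
      have a1 : |g + (E - U (n + l)) * d0 - d1| ≤ |g| + |E - U (n + l)| * |d0| + |d1| := by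
        rw [← abs_mul]
        exact (abs_sub _ _).trans (by gcongr; exact abs_add_le _ _)
      have a2 : |E - U (n + l)| * |d0| ≤ (|E| + ‖U‖) * (C * S) := by gcongr
      nlinarith [abs_nonneg g, mul_nonneg hK hC, mul_nonneg (mul_nonneg hK hC) (abs_nonneg g),
        mul_nonneg hC (abs_nonneg g)]
    · refine h0.trans ?_
      nlinarith [abs_nonneg g, mul_nonneg hK hC, mul_nonneg (mul_nonneg hK hC) (abs_nonneg g),
        mul_nonneg hC (abs_nonneg g), mul_nonneg (mul_nonneg hK hC) hS0]

lemma transMat_bound (E : ℝ) (U : ℤ →ᵇ ℝ) (l : ℕ) :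
    ∃ C : ℝ, 0 ≤ C ∧ ∀ n i j, |transMat E U n l i j| ≤ C := by
  induction l with
  | zero =>
    refine ⟨1, zero_le_one, fun n i j => ?_⟩
    fin_cases i <;> fin_cases j <;> simp [transMat]
  | succ l ih =>
    obtain ⟨C, hC, ih⟩ := ih
    refine ⟨(|E| + ‖U‖ + 1) * C, by positivity, fun n i j => ?_⟩
    have hU : |E - U (n + l)| ≤ |E| + ‖U‖ :=
      (abs_sub _ _).trans (by gcongr; exact U.norm_coe_le_norm _)
    have hK : 0 ≤ |E| + ‖U‖ := by positivity
    fin_cases i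
    · have : transMat E U n (l + 1) 0 j =
          (E - U (n + l)) * transMat E U n l 0 j - transMat E U n l 1 j := by
        simp [transMat, stepMat, Matrix.mul_apply, Fin.sum_univ_two]; ring
      simp only [Fin.zero_eta, this]
      refine (abs_sub _ _).trans ?_
      rw [abs_mul]
      have := mul_le_mul hU (ih n 0 j) (abs_nonneg _) hK
      linarith [ih n 1 j]
    · have : transMat E U n (l + 1) 1 j = transMat E U n l 0 j := by
        simp [transMat, stepMat, Matrix.mul_apply, Fin.sum_univ_two]
      simp only [Fin.mk_one, this]
      nlinarith [ih n 0 j]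

lemma ell2_norm_le_sum {e g : Ell2} {C : ℝ} (hC : 0 ≤ C) (s : Finset ℤ)
    (h : ∀ n, |e n| ≤ C * ∑ j ∈ s, |g (n + j)|) : ‖e‖ ≤ C * s.card * ‖g‖ := by
  let ga : Ell2 := ell2Mk (fun n => |g n|) (by simpa using ell2_summable g)
  have hga : ‖ga‖ = ‖g‖ := le_antisymm (ell2_norm_le fun n => by simp [ga])
    (ell2_norm_le fun n => by simp [ga])
  have h1 : ‖e‖ ≤ ‖C • ∑ j ∈ s, shiftOp j ga‖ := by
    refine ell2_norm_le fun n => ?_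
    have : (C • ∑ j ∈ s, shiftOp j ga) n = C * ∑ j ∈ s, |g (n + j)| := by
      rw [ell2_smul_apply, lp.coeFn_sum, Finset.sum_apply]; rfl
    rw [this]
    exact (h n).trans (le_abs_self _)
  refine h1.trans ?_
  rw [norm_smul, Real.norm_of_nonneg hC, mul_assoc]
  gcongr
  refine (norm_sum_le _ _).trans ?_
  simp [hga]

/-- If the monodromy matrix of a periodic potential is hyperbolic, the energy lies in a
spectral gap. By Cayley-Hamilton, `f (n + q) + f (n - q) = τ f n` up to an error controlled
by `(H_U - E) f`, where `τ` is the trace. -/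
lemma bddBelow_of_trace {E : ℝ} {U : ℤ →ᵇ ℝ} {q : ℕ} (hU : ∀ n, U (n + q) = U n)
    (ht : 2 < |(transMat E U 0 q).trace|) : BddBelow' (schr U E) := by
  set τ := (transMat E U 0 q).trace with hτ
  obtain ⟨C, hC, hG⟩ := transMat_approx E U q
  obtain ⟨D, hD, hM⟩ := transMat_bound E U q
  set s : Finset ℤ := Finset.Icc (-q : ℤ) q
  set K := C * (1 + 2 * D) with hK
  have hK0 : 0 ≤ K := by positivity
  have hKs : 0 ≤ K * s.card := by positivity
  refine ⟨(|τ| - 2) / (K * s.card + 1), by apply div_pos <;> linarith, fun f => ?_⟩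
  rw [div_mul_eq_mul_div, div_le_iff₀ (by linarith)]
  set g := schr U E f with hg
  let e : Ell2 := shiftOp q f + shiftOp (-q) f - τ • f
  have he : ‖e‖ ≤ K * s.card * ‖g‖ := by
    refine ell2_norm_le_sum hK0 s fun n => ?_
    set M := transMat E U n q with hMdef
    have hM' : transMat E U (n - q) q = M := transMat_congr fun j _ => by
      rw [← hU]; congr 1; ring
    have htr : M 0 0 + M 1 1 = τ := by
      rw [hτ, ← transMat_trace hU n, Matrix.trace_fin_two]
    have hdet : M 0 0 * M 1 1 - M 0 1 * M 1 0 = 1 := by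
      rw [← Matrix.det_fin_two]; exact transMat_det _ _ _ _
    obtain ⟨a0, -⟩ := hG f n
    obtain ⟨b0, b1⟩ := hG f (n - q)
    rw [hM', sub_add_cancel] at b0 b1
    rw [← hMdef] at a0
    set r1 := f (n + q) - (M 0 0 * f n + M 0 1 * f (n - 1))
    set r2 := f n - (M 0 0 * f (n - q) + M 0 1 * f (n - q - 1))
    set r3 := f (n - 1) - (M 1 0 * f (n - q) + M 1 1 * f (n - q - 1))
    have hen : e n = r1 - M 1 1 * r2 + M 0 1 * r3 := by
      have : e n = f (n + q) + f (n + -q) - τ * f n := rfl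
      rw [this, ← sub_eq_add_neg, ← htr]
      simp only [r1, r2, r3]
      linear_combination (-f (n - q)) * hdet
    set T := ∑ j ∈ s, |g (n + j)|
    have c1 : ∑ j ∈ Finset.range q, |g (n + j)| ≤ T := by
      rw [← Finset.sum_image (s := Finset.range q) (g := fun j : ℕ => (j : ℤ))
        (f := fun j : ℤ => |g (n + j)|) (fun a _ b _ h => by
          have : (a : ℤ) = b := h
          omega)]
      refine Finset.sum_le_sum_of_subset_of_nonneg ?_ fun _ _ _ => abs_nonneg _
      intro j hj
      simp only [Finset.mem_image, Finset.mem_range] at hj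
      simp only [s, Finset.mem_Icc]
      omega
    have c2 : ∑ j ∈ Finset.range q, |g (n - q + j)| ≤ T := by
      have : ∀ j : ℕ, |g (n - q + j)| = |g (n + ((j : ℤ) - q))| := fun j => by
        rw [show n - q + (j : ℤ) = n + (j - q) by ring]
      simp only [this]
      rw [← Finset.sum_image (s := Finset.range q) (g := fun j : ℕ => (j : ℤ) - q)
        (f := fun j : ℤ => |g (n + j)|) (fun a _ b _ h => by
          have : (a : ℤ) - q = b - q := h
          omega)]
      refine Finset.sum_le_sum_of_subset_of_nonneg ?_ fun _ _ _ => abs_nonneg _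
      intro j hj
      simp only [Finset.mem_image, Finset.mem_range] at hj
      simp only [s, Finset.mem_Icc]
      omega
    have d1 : |r1| ≤ C * T := a0.trans (by gcongr)
    have d2 : |r2| ≤ C * T := b0.trans (by gcongr)
    have d3 : |r3| ≤ C * T := b1.trans (by gcongr)
    rw [hen]
    calc |r1 - M 1 1 * r2 + M 0 1 * r3| ≤ |r1| + |M 1 1| * |r2| + |M 0 1| * |r3| := by
          rw [← abs_mul, ← abs_mul]
          exact (abs_add_le _ _).trans (by gcongr; exact abs_sub _ _)
      _ ≤ C * T + D * (C * T) + D * (C * T) := by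
          gcongr
          · exact hM n 1 1
          · exact hM n 0 1
      _ = K * T := by rw [hK]; ring
  have h1 : ‖τ • f‖ ≤ ‖f‖ + ‖f‖ + ‖e‖ := by
    have : τ • f = shiftOp q f + shiftOp (-q) f - e := by simp only [e]; abel
    rw [this]
    refine (norm_sub_le _ _).trans ?_
    gcongr
    refine (norm_add_le _ _).trans ?_
    rw [LinearIsometry.norm_map, LinearIsometry.norm_map]
  rw [norm_smul, Real.norm_eq_abs] at h1
  nlinarith [norm_nonneg g]

/-! ### Hyperbolic words -/

/-- Lower-triangular shear. -/
def shear (v : ℝ) : Matrix (Fin 2) (Fin 2) ℝ := !![1, 0; v, 1]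

lemma shear_add (v w : ℝ) : shear (v + w) = shear v * shear w := by
  ext i j; fin_cases i <;> fin_cases j <;> simp [shear, Matrix.mul_apply, Fin.sum_univ_two]

/-- The product `(C · shear (v (n-1))) ⋯ (C · shear (v 0))`. -/
def wordMat (C : Matrix (Fin 2) (Fin 2) ℝ) (v : ℕ → ℝ) : ℕ → Matrix (Fin 2) (Fin 2) ℝ
  | 0 => 1
  | n + 1 => C * shear (v n) * wordMat C v n

lemma wordMat_det {C : Matrix (Fin 2) (Fin 2) ℝ} (hC : C.det = 1) (v : ℕ → ℝ) (n : ℕ) :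
    (wordMat C v n).det = 1 := by
  induction n with
  | zero => simp [wordMat]
  | succ n ih =>
    rw [wordMat, Matrix.det_mul, Matrix.det_mul, ih, hC]; simp [shear, Matrix.det_fin_two]

lemma wordMat_congr {C : Matrix (Fin 2) (Fin 2) ℝ} {v w : ℕ → ℝ} {n : ℕ}
    (h : ∀ i < n, v i = w i) : wordMat C v n = wordMat C w n := by
  induction n with
  | zero => rfl
  | succ n ih => rw [wordMat, wordMat, ih fun i hi => h i (by omega), h n (by omega)]

lemma wordMat_add (C : Matrix (Fin 2) (Fin 2) ℝ) (v : ℕ → ℝ) (a b : ℕ) :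
    wordMat C v (a + b) = wordMat C (fun i => v (a + i)) b * wordMat C v a := by
  induction b with
  | zero => simp [wordMat]
  | succ b ih => rw [← add_assoc, wordMat, ih, wordMat, ← Matrix.mul_assoc]

lemma wordMat_repeat (C : Matrix (Fin 2) (Fin 2) ℝ) (v : ℕ → ℝ) (n N : ℕ) :
    wordMat C (fun i => v (i % n)) (n * N) = wordMat C v n ^ N := by
  induction N with
  | zero => simp [wordMat]
  | succ N ih =>
    rw [Nat.mul_succ, wordMat_add, ih, pow_succ']
    congr 1
    apply wordMat_congr
    intro i hi
    simp [Nat.mod_eq_of_lt hi]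

/-- Changing the first letter multiplies the word by a shear on the right. -/
lemma wordMat_first (C : Matrix (Fin 2) (Fin 2) ℝ) (v : ℕ → ℝ) (s : ℝ) (n : ℕ) :
    wordMat C (fun i => v i + if i = 0 then s else 0) (n + 1)
      = wordMat C v (n + 1) * shear s := by
  induction n with
  | zero => simp [wordMat, shear_add, Matrix.mul_assoc]
  | succ n ih => rw [wordMat, ih, wordMat.eq_2 C v (n + 1)]; simp [Matrix.mul_assoc]

/-- Changing the last letter multiplies the word by a conjugated shear on the left. -/
lemma wordMat_last {C : Matrix (Fin 2) (Fin 2) ℝ} (hC : C.det = 1) (v : ℕ → ℝ) (t : ℝ) (n : ℕ) :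
    wordMat C (fun i => v i + if i = n then t else 0) (n + 1)
      = C * shear t * C.adjugate * wordMat C v (n + 1) := by
  rw [wordMat, wordMat]
  have h1 : wordMat C (fun i => v i + if i = n then t else 0) n = wordMat C v n :=
    wordMat_congr fun i hi => by simp [hi.ne]
  have h2 : C.adjugate * C = 1 := by rw [Matrix.adjugate_mul, hC, one_smul]
  rw [h1]
  simp only [if_true]
  rw [add_comm (v n) t, shear_add]
  calc C * (shear t * shear (v n)) * wordMat C v n
      = C * shear t * 1 * shear (v n) * wordMat C v n := by
        simp only [Matrix.mul_one, Matrix.mul_assoc]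
    _ = _ := by rw [← h2]; simp only [Matrix.mul_assoc]

lemma exists_small_pos {α β γ ε : ℝ} (hε : 0 < ε) (h : ¬ (α = 0 ∧ β = 0 ∧ γ = 0)) :
    ∃ s t : ℝ, |s| ≤ ε ∧ |t| ≤ ε ∧ 0 < α * s + β * t + γ * (s * t) := by
  have hsg : ∀ x : ℝ, x ≠ 0 → ∃ s, |s| ≤ ε ∧ 0 < x * s := by
    intro x hx
    rcases lt_or_gt_of_ne hx with h | h
    · exact ⟨-ε, by rw [abs_neg, abs_of_pos hε], by nlinarith⟩
    · exact ⟨ε, by rw [abs_of_pos hε], by nlinarith⟩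
  by_cases hα : α = 0
  · by_cases hβ : β = 0
    · have hγ : γ ≠ 0 := fun hγ => h ⟨hα, hβ, hγ⟩
      obtain ⟨s, hs, hs'⟩ := hsg γ hγ
      exact ⟨s, ε, hs, by rw [abs_of_pos hε], by rw [hα, hβ]; nlinarith⟩
    · obtain ⟨t, ht, ht'⟩ := hsg β hβ
      exact ⟨0, t, by simpa using hε.le, ht, by simpa using ht'⟩
  · obtain ⟨s, hs, hs'⟩ := hsg α hα
    exact ⟨s, 0, hs, by simpa using hε.le, by simpa using hs'⟩

/-- A non-elliptic word becomes hyperbolic after a small change of its first and last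
letters: the trace is `τ + α s + β t + γ s t`, whose coefficients cannot all vanish. -/
lemma word_hyperbolic_of_ge {C : Matrix (Fin 2) (Fin 2) ℝ} (hC : C.det = 1) (hC1 : C 0 1 ≠ 0)
    (v : ℕ → ℝ) (n : ℕ) (h : 2 ≤ |(wordMat C v (n + 1)).trace|) {ε : ℝ} (hε : 0 < ε) :
    ∃ w : ℕ → ℝ, (∀ i, |w i - v i| ≤ ε) ∧ 2 < |(wordMat C w (n + 1)).trace| := by
  set P := wordMat C v (n + 1) with hP
  have hdet : P 0 0 * P 1 1 - P 0 1 * P 1 0 = 1 := by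
    rw [← Matrix.det_fin_two]; exact wordMat_det hC _ _
  set α := P 0 1
  set β := C 0 1 * C 1 1 * P 0 0 - C 0 1 ^ 2 * P 1 0 + C 1 1 ^ 2 * P 0 1 - C 0 1 * C 1 1 * P 1 1
  set γ := C 0 1 * C 1 1 * P 0 1 - C 0 1 ^ 2 * P 1 1
  have hne : ¬ (α = 0 ∧ β = 0 ∧ γ = 0) := by
    rintro ⟨h1, -, h3⟩
    have h1' : P 0 1 = 0 := h1
    have h3' : C 0 1 * C 1 1 * P 0 1 - C 0 1 ^ 2 * P 1 1 = 0 := h3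
    rw [h1'] at h3'
    rw [h1] at hdet
    have : P 1 1 = 0 := by
      have : C 0 1 ^ 2 * P 1 1 = 0 := by linarith
      exact (mul_eq_zero.1 this).resolve_left (pow_ne_zero 2 hC1)
    rw [this] at hdet
    norm_num at hdet
  have htr : ∀ s t : ℝ, (wordMat C (fun i => (v i + if i = 0 then s else 0) +
      if i = n then t else 0) (n + 1)).trace = P.trace + (α * s + β * t + γ * (s * t)) := by
    intro s t
    rw [wordMat_last hC (fun i => v i + if i = 0 then s else 0), wordMat_first, ← hP]
    have hCd : C 0 0 * C 1 1 - C 0 1 * C 1 0 = 1 := by rw [← Matrix.det_fin_two]; exact hC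
    simp only [Matrix.trace_fin_two, Matrix.mul_apply, Fin.sum_univ_two, shear,
      Matrix.adjugate_fin_two, Matrix.of_apply, Matrix.cons_val', Matrix.cons_val_zero,
      Matrix.cons_val_one, Matrix.cons_val_fin_one, α, β, γ]
    linear_combination (P 0 0 + P 1 1 + s * P 0 1) * hCd
  have hdev : ∀ s t : ℝ, |s| ≤ ε / 2 → |t| ≤ ε / 2 → ∀ i, |((v i + if i = 0 then s else 0) +
      if i = n then t else 0) - v i| ≤ ε := by
    intro s t hs ht i
    have : ((v i + if i = 0 then s else 0) + if i = n then t else 0) - v i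
      = (if i = 0 then s else 0) + if i = n then t else 0 := by ring
    rw [this]
    refine (abs_add_le _ _).trans ?_
    have h1 : |if i = 0 then s else 0| ≤ ε / 2 := by split_ifs; exacts [hs, by simp; linarith]
    have h2 : |if i = n then t else 0| ≤ ε / 2 := by split_ifs; exacts [ht, by simp; linarith]
    linarith
  rcases le_abs.1 h with h | h
  · obtain ⟨s, t, hs, ht, hpos⟩ := exists_small_pos (half_pos hε) hne
    refine ⟨_, hdev s t hs ht, ?_⟩
    rw [htr]
    exact lt_abs.2 (Or.inl (by linarith))
  · have hne' : ¬ (-α = 0 ∧ -β = 0 ∧ -γ = 0) := by simpa only [neg_eq_zero] using hne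
    obtain ⟨s, t, hs, ht, hpos⟩ := exists_small_pos (half_pos hε) hne'
    refine ⟨_, hdev s t hs ht, ?_⟩
    rw [htr]
    exact lt_abs.2 (Or.inr (by linarith))

lemma trace_pow_eq {P : Matrix (Fin 2) (Fin 2) ℝ} (hP : P.det = 1) {θ : ℝ}
    (h : P.trace = 2 * Real.cos θ) (n : ℕ) : (P ^ n).trace = 2 * Real.cos (n * θ) := by
  have hCH : P * P = P.trace • P - 1 := by
    have hd : P 0 0 * P 1 1 - P 0 1 * P 1 0 = 1 := by rw [← Matrix.det_fin_two]; exact hP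
    ext i j
    fin_cases i <;> fin_cases j <;>
      simp [Matrix.mul_apply, Fin.sum_univ_two, Matrix.trace_fin_two] <;> first
        | ring1
        | linear_combination -hd
  induction n using Nat.twoStepInduction with
  | zero => simp
  | one => simpa using h
  | more n ih0 ih1 =>
    have : P ^ (n + 2) = P.trace • P ^ (n + 1) - P ^ n := by
      rw [pow_add, pow_two, hCH, Matrix.mul_sub, Matrix.mul_smul, ← pow_succ, Matrix.mul_one]
    rw [this, Matrix.trace_sub, Matrix.trace_smul, ih0, ih1, h, smul_eq_mul]
    have e1 : ((n + 2 : ℕ) : ℝ) * θ = ((n + 1 : ℕ) : ℝ) * θ + θ := by push_cast; ring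
    have e2 : (n : ℝ) * θ = ((n + 1 : ℕ) : ℝ) * θ - θ := by push_cast; ring
    rw [e1, e2, Real.cos_add, Real.cos_sub]; ring

/-- Any word has, after repetition, arbitrarily small hyperbolic perturbations. An elliptic
word is first perturbed so that its rotation angle is a rational multiple of `π`; then some
power of it is `±1`. -/
lemma word_hyperbolic_dense {C : Matrix (Fin 2) (Fin 2) ℝ} (hC : C.det = 1) (hC1 : C 0 1 ≠ 0)
    (v : ℕ → ℝ) {n : ℕ} (hn : 0 < n) {ε : ℝ} (hε : 0 < ε) :
    ∃ N : ℕ, 0 < N ∧ ∃ w : ℕ → ℝ, (∀ i, |w i - v (i % n)| ≤ ε) ∧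
      2 < |(wordMat C w (n * N)).trace| := by
  obtain ⟨n, rfl⟩ : ∃ m, n = m + 1 := ⟨n - 1, by omega⟩
  obtain ⟨N, hN, v', hv', hge⟩ : ∃ N : ℕ, 0 < N ∧ ∃ v' : ℕ → ℝ, (∀ i, |v' i - v i| ≤ ε / 2) ∧
      2 ≤ |(wordMat C v' (n + 1) ^ N).trace| := by
    set P := wordMat C v (n + 1) with hP
    by_cases hge : 2 ≤ |P.trace|
    · exact ⟨1, one_pos, v, fun i => by simp; linarith, by rwa [pow_one]⟩
    push Not at hge
    have hdet : P 0 0 * P 1 1 - P 0 1 * P 1 0 = 1 := by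
      rw [← Matrix.det_fin_two]; exact wordMat_det hC _ _
    have h01 : P 0 1 ≠ 0 := by
      intro h0
      rw [h0] at hdet
      rw [Matrix.trace_fin_two] at hge
      have := sq_lt_sq' (by linarith [abs_lt.1 hge]) (abs_lt.1 hge).2
      nlinarith [sq_nonneg (P 0 0 - P 1 1)]
    set τ := P.trace
    have hcos : 2 * Real.cos (Real.arccos (τ / 2)) = τ := by
      rw [Real.cos_arccos] <;> linarith [abs_lt.1 hge]
    have hη : 0 < ε / 2 * |P 0 1| := by have := abs_pos.2 h01; positivity
    obtain ⟨δ, hδ, hδ'⟩ := Metric.continuousAt_iff.1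
      (show ContinuousAt (fun x => 2 * Real.cos x) (Real.arccos (τ / 2)) by fun_prop) _ hη
    obtain ⟨x, hx1, hx2⟩ := exists_rat_btwn
      (show Real.arccos (τ / 2) / Real.pi < (Real.arccos (τ / 2) + δ) / Real.pi by
        have := Real.pi_pos
        gcongr; linarith)
    rw [div_lt_iff₀ Real.pi_pos] at hx1
    rw [lt_div_iff₀ Real.pi_pos] at hx2
    set θ := (x : ℝ) * Real.pi
    have hθ := hδ' (x := θ) (by rw [Real.dist_eq, abs_lt]; constructor <;> linarith)
    simp only [hcos] at hθ
    rw [Real.dist_eq] at hθ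
    refine ⟨x.den, x.den_pos, fun i => v i + if i = 0 then (2 * Real.cos θ - τ) / P 0 1 else 0,
      fun i => ?_, ?_⟩
    · rw [add_sub_cancel_left]
      split_ifs
      · rw [abs_div, div_le_iff₀ (abs_pos.2 h01)]; exact hθ.le
      · simp; linarith
    · rw [wordMat_first, ← hP]
      have htr : (P * shear ((2 * Real.cos θ - τ) / P 0 1)).trace = 2 * Real.cos θ := by
        have : (P * shear ((2 * Real.cos θ - τ) / P 0 1)).trace
            = P.trace + P 0 1 * ((2 * Real.cos θ - τ) / P 0 1) := by
          simp [Matrix.trace_fin_two, Matrix.mul_apply, Fin.sum_univ_two, shear]; ring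
        rw [this, mul_div_cancel₀ _ h01]; simp only [τ]; ring
      have hd : (P * shear ((2 * Real.cos θ - τ) / P 0 1)).det = 1 := by
        rw [Matrix.det_mul, wordMat_det hC]; simp [shear, Matrix.det_fin_two]
      rw [trace_pow_eq hd htr]
      have : (x.den : ℝ) * θ = x.num * Real.pi := by
        simp only [θ]
        rw [← mul_assoc]
        congr 1
        rw [mul_comm]
        exact_mod_cast Rat.mul_den_eq_num x
      rw [this, abs_mul, Real.abs_cos_int_mul_pi]; norm_num
  rw [← wordMat_repeat] at hge
  obtain ⟨m, hm⟩ : ∃ m, (n + 1) * N = m + 1 := ⟨(n + 1) * N - 1, by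
    have : 0 < (n + 1) * N := by positivity
    omega⟩
  rw [hm] at hge
  obtain ⟨w, hw, hw2⟩ := word_hyperbolic_of_ge hC hC1 _ m hge (half_pos hε)
  refine ⟨N, hN, w, fun i => ?_, by rw [hm]; exact hw2⟩
  have h1 := hw i
  have h2 := hv' (i % (n + 1))
  rw [abs_le] at *
  constructor <;> linarith

/-! ### The sieve map and density of gaps -/

lemma sieveWith_sub_le (V V' : ℤ → ℝ) {k : ℕ} (hk : 0 < k) (b : Fin (k - 1) → ℝ) {n n' : ℤ}
    (h : n % (k : ℤ) = n' % (k : ℤ)) :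
    |sieveWith V k b n - sieveWith V' k b n'| ≤ |V (n / k) - V' (n' / k)| := by
  have hd : (k : ℤ) ∣ n ↔ (k : ℤ) ∣ n' := by
    rw [Int.dvd_iff_emod_eq_zero, Int.dvd_iff_emod_eq_zero, h]
  unfold sieveWith
  by_cases h1 : (k : ℤ) ∣ n
  · rw [dif_pos h1, dif_pos (hd.1 h1)]
  · rw [dif_neg h1, dif_neg (fun h2 => h1 (hd.2 h2)), dif_pos hk, dif_pos hk]
    simp only [h, sub_self, abs_zero]
    exact abs_nonneg _

lemma sieveWith_congr {V V' : ℤ → ℝ} {k : ℕ} (hk : 0 < k) (b : Fin (k - 1) → ℝ) {n n' : ℤ}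
    (h : n % (k : ℤ) = n' % (k : ℤ)) (h2 : V (n / k) = V' (n' / k)) :
    sieveWith V k b n = sieveWith V' k b n' := by
  have := sieveWith_sub_le V V' hk b h
  rw [h2, sub_self, abs_zero] at this
  exact sub_eq_zero.1 (abs_nonpos_iff.1 this)

lemma sieveWith_mul (V : ℤ → ℝ) {k : ℕ} (hk : 0 < k) (b : Fin (k - 1) → ℝ) (i : ℤ) :
    sieveWith V k b (k * i) = V i := by
  unfold sieveWith
  rw [dif_pos (dvd_mul_right _ _), Int.mul_ediv_cancel_left _ (by exact_mod_cast hk.ne')]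

/-- The values of `V^{[k,b]}` off `kℤ` do not depend on `V`. -/
lemma sieveWith_not_dvd (V V' : ℤ → ℝ) {k : ℕ} (hk : 0 < k) (b : Fin (k - 1) → ℝ) {n n' : ℤ}
    (h : n % (k : ℤ) = n' % (k : ℤ)) (h2 : ¬ (k : ℤ) ∣ n) :
    sieveWith V k b n = sieveWith V' k b n' := by
  have hd : (k : ℤ) ∣ n ↔ (k : ℤ) ∣ n' := by
    rw [Int.dvd_iff_emod_eq_zero, Int.dvd_iff_emod_eq_zero, h]
  unfold sieveWith
  rw [dif_neg h2, dif_neg (fun h3 => h2 (hd.2 h3)), dif_pos hk, dif_pos hk]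
  simp only [h]

lemma sieveWith_bound (V : ℤ →ᵇ ℝ) (k : ℕ) (b : Fin (k - 1) → ℝ) (n : ℤ) :
    ‖sieveWith V k b n‖ ≤ ‖V‖ + ∑ i, |b i| := by
  have hs : 0 ≤ ∑ i, |b i| := Finset.sum_nonneg fun i _ => abs_nonneg _
  unfold sieveWith
  split_ifs
  · have := V.norm_coe_le_norm (n / k); linarith
  · rw [Real.norm_eq_abs]
    exact (Finset.single_le_sum (f := fun i => |b i|) (fun i _ => abs_nonneg _)
      (Finset.mem_univ _)).trans (by linarith [norm_nonneg V])
  · rw [norm_zero]; linarith [norm_nonneg V]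

/-- `V^{[k,b]}` as a bounded function. -/
def sieveB (k : ℕ) (b : Fin (k - 1) → ℝ) (V : ℤ →ᵇ ℝ) : ℤ →ᵇ ℝ :=
  BoundedContinuousFunction.ofNormedAddCommGroupDiscrete (sieveWith V k b) _
    (sieveWith_bound V k b)

lemma sieveB_coe (k : ℕ) (b : Fin (k - 1) → ℝ) (V : ℤ →ᵇ ℝ) :
    ⇑(sieveB k b V) = sieveWith V k b := rfl

lemma sieveB_norm_le (k : ℕ) (b : Fin (k - 1) → ℝ) (V : ℤ →ᵇ ℝ) :
    ‖sieveB k b V‖ ≤ ‖V‖ + ∑ i, |b i| :=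
  (BoundedContinuousFunction.norm_le
    (by have : 0 ≤ ∑ i, |b i| := Finset.sum_nonneg fun i _ => abs_nonneg _
        positivity)).2 fun n => sieveWith_bound V k b n

lemma sieveB_sub_le {k : ℕ} (hk : 0 < k) (b : Fin (k - 1) → ℝ) (V V' : ℤ →ᵇ ℝ) :
    ‖sieveB k b V' - sieveB k b V‖ ≤ ‖V' - V‖ :=
  (BoundedContinuousFunction.norm_le (norm_nonneg _)).2 fun n =>
    (sieveWith_sub_le V' V hk b rfl).trans ((V' - V).norm_coe_le_norm (n / k))

lemma sieveWith_periodic {V : ℤ → ℝ} {k : ℕ} (hk : 0 < k) (b : Fin (k - 1) → ℝ) {q : ℕ}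
    (hV : ∀ n, V (n + q) = V n) (n : ℤ) :
    sieveWith V k b (n + (k * q : ℕ)) = sieveWith V k b n := by
  apply sieveWith_congr hk
  · push_cast; rw [Int.add_mul_emod_self_left]
  · push_cast; rw [Int.add_mul_ediv_left _ _ (by exact_mod_cast hk.ne'), hV]

lemma periodic_mul {V : ℤ → ℝ} {q : ℕ} (hV : ∀ n, V (n + q) = V n) (i n : ℤ) :
    V (n + i * q) = V n := by
  induction i with
  | zero => simp
  | succ i ih => rw [← ih, ← hV (n + i * q)]; congr 1; ring
  | pred i ih => rw [← ih, ← hV (n + (-i - 1) * q)]; congr 1; ring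

lemma hasPeriods_of_LPZ {V : ℤ →ᵇ ℝ} (hV : V ∈ LPZ) : HasPeriods V := by
  intro ε hε
  obtain ⟨W, ⟨q, hq, hW⟩, hd⟩ := Metric.mem_closure_iff.1 hV (ε / 2) (by positivity)
  refine ⟨q, hq, fun n i => ?_⟩
  have h1 := (BoundedContinuousFunction.dist_coe_le_dist (f := V) (g := W) n).trans hd.le
  have h2 := (BoundedContinuousFunction.dist_coe_le_dist (f := V) (g := W) (n + i * q)).trans hd.le
  rw [periodic_mul hW] at h2
  rw [Real.dist_eq, abs_le] at *
  constructor <;> linarith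

lemma hasPeriods_sieve {V : ℤ → ℝ} (hV : HasPeriods V) {k : ℕ} (hk : 0 < k)
    (b : Fin (k - 1) → ℝ) : HasPeriods (sieveWith V k b) := by
  intro ε hε
  obtain ⟨q, hq, h⟩ := hV ε hε
  refine ⟨k * q, Nat.mul_pos hk hq, fun n i => ?_⟩
  have e : n + i * ((k * q : ℕ) : ℤ) = n + k * (i * q) := by push_cast; ring
  refine (sieveWith_sub_le V V hk b ?_).trans ?_
  · rw [e, Int.add_mul_emod_self_left]
  · rw [e, Int.add_mul_ediv_left _ _ (by exact_mod_cast hk.ne')]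
    exact h _ _

/-- The transfer matrix across the inserted string `b`. -/
def blockMat (k : ℕ) (b : Fin (k - 1) → ℝ) (E : ℝ) : Matrix (Fin 2) (Fin 2) ℝ :=
  transMat E (sieveWith 0 k b) 1 (k - 1)

/-- The `V`-independent factor of the transfer matrix over one block of length `k`. -/
def coreMat (k : ℕ) (b : Fin (k - 1) → ℝ) (E : ℝ) : Matrix (Fin 2) (Fin 2) ℝ :=
  blockMat k b E * !![E, -1; 1, 0]

lemma coreMat_det (k : ℕ) (b : Fin (k - 1) → ℝ) (E : ℝ) : (coreMat k b E).det = 1 := by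
  rw [coreMat, Matrix.det_mul, blockMat, transMat_det]; simp [Matrix.det_fin_two]

lemma coreMat_apply (k : ℕ) (b : Fin (k - 1) → ℝ) (E : ℝ) :
    coreMat k b E 0 1 = - blockMat k b E 0 0 := by
  simp [coreMat, Matrix.mul_apply, Fin.sum_univ_two]

lemma transMat_block {k : ℕ} (hk : 0 < k) (b : Fin (k - 1) → ℝ) (V : ℤ → ℝ) (E : ℝ) (i : ℤ) :
    transMat E (sieveWith V k b) (k * i) k = coreMat k b E * shear (V i) := by
  have h1 : transMat E (sieveWith V k b) (k * i + 1) (k - 1) = blockMat k b E := by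
    apply transMat_congr
    intro j hj
    have hlt : (1 + (j : ℤ)) % k = 1 + j := Int.emod_eq_of_lt (by omega) (by omega)
    apply sieveWith_not_dvd _ _ hk
    · rw [add_assoc, Int.mul_add_emod_self_left]
    · rw [Int.dvd_iff_emod_eq_zero, add_assoc, Int.mul_add_emod_self_left, hlt]; omega
  have h2 := transMat_succ' E (sieveWith V k b) (k * i) (k - 1)
  rw [h1, Nat.sub_add_cancel hk, sieveWith_mul V hk] at h2
  rw [h2, coreMat, Matrix.mul_assoc]
  congr 1
  ext i j
  fin_cases i <;> fin_cases j <;> simp [stepMat, shear, Matrix.mul_apply, Fin.sum_univ_two]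
  ring

lemma transMat_sieve {k : ℕ} (hk : 0 < k) (b : Fin (k - 1) → ℝ) (V : ℤ → ℝ) (w : ℕ → ℝ) (E : ℝ)
    (m : ℕ) (h : ∀ i < m, V i = w i) :
    transMat E (sieveWith V k b) 0 (k * m) = wordMat (coreMat k b E) w m := by
  induction m with
  | zero => simp [transMat, wordMat]
  | succ m ih =>
    rw [Nat.mul_succ, transMat_add, ih fun i hi => h i (by omega), wordMat]
    have := transMat_block hk b V E m
    push_cast
    rw [zero_add, this, h m (by omega)]

open Polynomial in
lemma transMat_poly (U : ℤ → ℝ) (n : ℤ) (l : ℕ) : ∃ p q : ℝ[X], p.Monic ∧ p.degree = l ∧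
    q.degree < l ∧ ∀ E, transMat E U n l 0 0 = p.eval E ∧ transMat E U n l 1 0 = q.eval E := by
  induction l with
  | zero => exact ⟨1, 0, monic_one, by simp, by simp, fun E => by simp [transMat]⟩
  | succ l ih =>
    obtain ⟨p, q, hp, hpd, hqd, h⟩ := ih
    have hd : ((X - Polynomial.C (U (n + l))) * p).degree = ((l + 1 : ℕ) : WithBot ℕ) := by
      rw [degree_mul, degree_X_sub_C, hpd]; push_cast; rw [add_comm]
    have hlt : (l : WithBot ℕ) < ((l + 1 : ℕ) : WithBot ℕ) := by exact_mod_cast Nat.lt_succ_self l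
    have hlt2 : q.degree < ((X - Polynomial.C (U (n + l))) * p).degree := by rw [hd]; exact hqd.trans hlt
    refine ⟨(X - Polynomial.C (U (n + l))) * p - q, p, ((monic_X_sub_C _).mul hp).sub_of_left hlt2, ?_,
      by rw [hpd]; exact hlt, fun E => ?_⟩
    · rw [degree_sub_eq_left_of_degree_lt hlt2, hd]
    · rw [transMat]
      simp only [stepMat, Matrix.mul_apply, Fin.sum_univ_two, (h E).1, (h E).2]
      constructor <;> simp
      ring

/-- The finitely many energies at which the perturbation argument may fail. -/
lemma exceptional_finite (k : ℕ) (b : Fin (k - 1) → ℝ) : {E : ℝ | blockMat k b E 0 0 = 0}.Finite := by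
  obtain ⟨p, q, hp, -, -, h⟩ := transMat_poly (sieveWith 0 k b) 1 (k - 1)
  refine (Polynomial.finite_setOfPred_isRoot hp.ne_zero).subset fun E hE => ?_
  rw [Set.mem_ofPred_eq] at hE ⊢
  rw [Polynomial.IsRoot, ← (h E).1]; exact hE

lemma gap_dense {k : ℕ} (hk : 0 < k) (b : Fin (k - 1) → ℝ) {V : ℤ →ᵇ ℝ} (hV : IsPeriodicSeq V)
    {E : ℝ} (hE : blockMat k b E 0 0 ≠ 0) {ε : ℝ} (hε : 0 < ε) :
    ∃ V' : ℤ →ᵇ ℝ, IsPeriodicSeq V' ∧ ‖V' - V‖ ≤ ε ∧ BddBelow' (schr (sieveB k b V') E) := by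
  obtain ⟨p, hp, hVp⟩ := hV
  obtain ⟨N, hN, w, hw, htr⟩ := word_hyperbolic_dense (coreMat_det k b E)
    (by rw [coreMat_apply]; exact neg_ne_zero.2 hE) (fun i => V i) hp hε
  have hpN : (0 : ℤ) < (p * N : ℕ) := by exact_mod_cast Nat.mul_pos hp hN
  set W : ℤ → ℝ := fun n => w (n % (p * N : ℕ)).toNat with hWdef
  have hWV : ∀ n, |W n - V n| ≤ ε := by
    intro n
    have h1 := hw (n % (p * N : ℕ)).toNat
    have h2 : (((n % (p * N : ℕ)).toNat % p : ℕ) : ℤ) = n % p := by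
      rw [Int.natCast_mod, Int.toNat_of_nonneg (Int.emod_nonneg _ hpN.ne'),
        Int.emod_emod_of_dvd _ (by push_cast; exact dvd_mul_right _ _)]
    have h3 : V (n % p) = V n := by
      rw [← periodic_mul hVp (n / p) (n % p), mul_comm, Int.emod_add_mul_ediv]
    rw [h2, h3] at h1
    exact h1
  have hWb : ∀ n, ‖W n‖ ≤ ‖V‖ + ε := by
    intro n
    have := V.norm_coe_le_norm n
    have h := hWV n
    rw [← Real.norm_eq_abs] at h
    calc ‖W n‖ = ‖V n + (W n - V n)‖ := by ring_nf
      _ ≤ _ := norm_add_le _ _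
      _ ≤ _ := by linarith
  have hWper : ∀ n, W (n + (p * N : ℕ)) = W n := by
    intro n; simp only [hWdef, Int.add_emod_right]
  set V' : ℤ →ᵇ ℝ := BoundedContinuousFunction.ofNormedAddCommGroupDiscrete W _ hWb with hV'
  refine ⟨V', ⟨p * N, Nat.mul_pos hp hN, hWper⟩,
    (BoundedContinuousFunction.norm_le hε.le).2 fun n => hWV n, ?_⟩
  refine bddBelow_of_trace (q := k * (p * N)) (fun n => sieveWith_periodic hk b hWper n) ?_
  have : transMat E (sieveB k b V') 0 (k * (p * N)) = wordMat (coreMat k b E) w (p * N) := by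
    refine transMat_sieve hk b W w E (p * N) fun i hi => ?_
    simp only [hWdef]
    rw [Int.emod_eq_of_lt (by omega) (by exact_mod_cast hi), Int.toNat_natCast]
  rw [this]
  exact htr

/-! ### Decay of approximate eigenvectors inside a gap -/

/-- The exponential weight `(1 + κ) ^ ρ - 1` attached to a bounded depth function `ρ`. -/
def weight (κ : ℝ) (hκ : 0 ≤ κ) (ρ : ℤ → ℕ) (M : ℕ) (hM : ∀ n, ρ n ≤ M) : ℤ →ᵇ ℝ :=
  BoundedContinuousFunction.ofNormedAddCommGroupDiscrete (fun n => (1 + κ) ^ ρ n - 1)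
    ((1 + κ) ^ M) (fun n => by
      have h1 : (1 : ℝ) ≤ (1 + κ) ^ ρ n := one_le_pow₀ (by linarith)
      have h2 : (1 + κ) ^ ρ n ≤ (1 + κ) ^ M := pow_le_pow_right₀ (by linarith) (hM n)
      rw [Real.norm_eq_abs, abs_of_nonneg (by linarith)]
      linarith)

lemma weight_apply (κ : ℝ) (hκ : 0 ≤ κ) (ρ : ℤ → ℕ) (M : ℕ) (hM : ∀ n, ρ n ≤ M) (n : ℤ) :
    weight κ hκ ρ M hM n = (1 + κ) ^ ρ n - 1 := rfl

lemma weight_norm_le (κ : ℝ) (hκ : 0 ≤ κ) (ρ : ℤ → ℕ) (M : ℕ) (hM : ∀ n, ρ n ≤ M) :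
    ‖weight κ hκ ρ M hM‖ ≤ (1 + κ) ^ M :=
  (BoundedContinuousFunction.norm_le (by positivity)).2 fun n => by
    have h1 : (1 : ℝ) ≤ (1 + κ) ^ ρ n := one_le_pow₀ (by linarith)
    have h2 : (1 + κ) ^ ρ n ≤ (1 + κ) ^ M := pow_le_pow_right₀ (by linarith) (hM n)
    rw [weight_apply, Real.norm_eq_abs, abs_of_nonneg (by linarith)]
    linarith

lemma pow_diff_le {κ : ℝ} (hκ : 0 ≤ κ) {a c : ℕ} (h1 : c ≤ a + 1) (h2 : a ≤ c + 1) :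
    |(1 + κ) ^ c - (1 + κ) ^ a| ≤ κ * (1 + κ) ^ a := by
  have hp : ∀ m : ℕ, (0 : ℝ) < (1 + κ) ^ m := fun m => by positivity
  rcases (by omega : c = a + 1 ∨ c = a ∨ a = c + 1) with h | h | h
  · rw [h, pow_succ, abs_of_nonneg] <;> nlinarith [hp a]
  · rw [h]; simp; have := hp a; positivity
  · rw [h, pow_succ, abs_le]
    have := hp c
    have := mul_nonneg hκ this.le
    constructor <;> nlinarith

/-- If `H_{U'}` has a gap of radius `η` around `E` and `U = U'` on the region `{ρ > 0}`, then
approximate eigenvectors of `H_U` at energy `E` decay exponentially in the depth `ρ`. -/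
lemma decay {U U' : ℤ →ᵇ ℝ} {E η : ℝ} (hη : 0 < η) (hgap : ∀ f, η * ‖f‖ ≤ ‖schr U' E f‖)
    {ρ : ℤ → ℕ} {M : ℕ} (hM : ∀ n, ρ n ≤ M) (h1 : ∀ n, ρ (n + 1) ≤ ρ n + 1)
    (h2 : ∀ n, ρ n ≤ ρ (n + 1) + 1) (hU : ∀ n, 0 < ρ n → U n = U' n) {f : Ell2} (hf : ‖f‖ = 1)
    (hs : (1 + η / 8) ^ M * ‖schr U E f‖ ≤ η / 2) :
    ‖mulOp (weight (η / 8) (by positivity) ρ M hM) f‖ ≤ 1 := by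
  set κ := η / 8 with hκ
  have hκ0 : 0 ≤ κ := by positivity
  set φ := weight κ hκ0 ρ M hM with hφ
  have hφa : ∀ n, φ n = (1 + κ) ^ ρ n - 1 := fun n => rfl
  have hφ0 : ∀ n, 0 ≤ φ n := fun n => by
    rw [hφa, sub_nonneg]; exact one_le_pow₀ (by linarith)
  set g := mulOp φ f with hg
  have hga : ∀ n, g n = φ n * f n := fun n => mulOp_apply _ _ _
  -- the terms coming from the commutator of `φ` with the shift by `a`
  have hcs : ∀ a : ℤ, Summable fun n => ((φ (n + a) - φ n) * f (n + a)) ^ 2 := by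
    intro a
    refine Summable.of_nonneg_of_le (fun n => sq_nonneg _) (fun n => ?_)
      ((ell2_summable_shift f a).mul_left ((2 * ‖φ‖) ^ 2))
    rw [mul_pow]
    refine mul_le_mul_of_nonneg_right ?_ (sq_nonneg _)
    rw [← sq_abs]
    refine pow_le_pow_left₀ (abs_nonneg _) ?_ 2
    have e1 := φ.norm_coe_le_norm (n + a)
    have e2 := φ.norm_coe_le_norm n
    rw [Real.norm_eq_abs] at e1 e2
    exact (abs_sub _ _).trans (by linarith)
  set comm : ℤ → Ell2 := fun a => ell2Mk _ (hcs a) with hcomm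
  have hcn : ∀ a : ℤ, (a = 1 ∨ a = -1) → ‖comm a‖ ≤ κ * (‖g‖ + 1) := by
    intro a ha
    have hle : ‖comm a‖ ≤ ‖shiftOp a (κ • (g + f))‖ := by
      apply ell2_norm_le
      intro n
      rw [shiftOp_apply, ell2_smul_apply, ell2_add_apply, hga]
      simp only [hcomm, ell2Mk_apply]
      rw [show κ * (φ (n + a) * f (n + a) + f (n + a)) = κ * (φ (n + a) + 1) * f (n + a) by ring,
        abs_mul, abs_mul]
      refine mul_le_mul_of_nonneg_right ?_ (abs_nonneg _)
      rw [abs_of_nonneg (a := κ * (φ (n + a) + 1)) (by have := hφ0 (n + a); positivity), hφa, hφa,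
        abs_sub_comm, sub_sub_sub_cancel_right, sub_add_cancel]
      apply pow_diff_le hκ0
      · rcases ha with rfl | rfl
        · exact h2 n
        · have := h1 (n + -1); rwa [neg_add_cancel_right] at this
      · rcases ha with rfl | rfl
        · exact h1 n
        · have := h2 (n + -1); rwa [neg_add_cancel_right] at this
    refine hle.trans ?_
    rw [LinearIsometry.norm_map, norm_smul, Real.norm_eq_abs, abs_of_nonneg hκ0]
    exact mul_le_mul_of_nonneg_left ((norm_add_le _ _).trans (by rw [hf])) hκ0
  have hid : schr U' E g = mulOp φ (schr U E f) + (comm (-1) + comm 1) := by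
    apply ell2_ext; intro n
    simp only [schr_apply, ell2_add_apply, hga, mulOp_apply, hcomm, ell2Mk_apply]
    have : (U' n - E) * (φ n * f n) = (U n - E) * (φ n * f n) := by
      by_cases hp : 0 < ρ n
      · rw [hU n hp]
      · have : φ n = 0 := by rw [hφa, show ρ n = 0 by omega]; simp
        rw [this]; ring
    rw [this, ← sub_eq_add_neg]; ring
  have hbound : η * ‖g‖ ≤ η / 2 + 2 * (κ * (‖g‖ + 1)) := by
    refine (hgap g).trans ?_
    rw [hid]
    refine (norm_add_le _ _).trans ?_
    have e1 : ‖mulOp φ (schr U E f)‖ ≤ η / 2 :=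
      (mulOp_norm_le _ _).trans ((mul_le_mul_of_nonneg_right (weight_norm_le κ hκ0 ρ M hM)
        (norm_nonneg _)).trans hs)
    have e2 := norm_add_le (comm (-1)) (comm 1)
    have e3 := hcn 1 (Or.inl rfl)
    have e4 := hcn (-1) (Or.inr rfl)
    linarith
  rw [hκ] at hbound
  by_contra! hlt
  nlinarith

/-! ### Comparison with decoupled finite blocks -/

lemma symm_matrix_bound {q : ℕ} (A : Matrix (Fin q) (Fin q) ℝ) (hA : A.IsHermitian) :
    ∃ S : Finset ℝ, S.card ≤ q ∧ ∀ (v : Fin q → ℝ) (E δ : ℝ), 0 ≤ δ →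
      (∀ s ∈ S, δ ≤ |s - E|) →
      δ ^ 2 * ∑ r, v r ^ 2 ≤ ∑ r, (A.mulVec v r - E * v r) ^ 2 := by
  classical
  have hT : (Matrix.toEuclideanLin A).IsSymmetric := Matrix.isSymmetric_toEuclideanLin_iff.2 hA
  have hn : Module.finrank ℝ (EuclideanSpace ℝ (Fin q)) = q := finrank_euclideanSpace_fin
  refine ⟨Finset.univ.image (hT.eigenvalues hn), Finset.card_image_le.trans (by simp),
    fun v E δ hδ h => ?_⟩
  set B := hT.eigenvectorBasis hn
  set x : EuclideanSpace ℝ (Fin q) := WithLp.toLp 2 v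
  have e1 : ∑ r, v r ^ 2 = ∑ i, (B.repr x i) ^ 2 := by
    have := B.repr.norm_map x
    rw [← sq_eq_sq₀ (norm_nonneg _) (norm_nonneg _), EuclideanSpace.real_norm_sq_eq,
      EuclideanSpace.real_norm_sq_eq] at this
    exact this.symm
  have e2 : ∑ r, (A.mulVec v r - E * v r) ^ 2
      = ∑ i, ((hT.eigenvalues hn i - E) * B.repr x i) ^ 2 := by
    have := B.repr.norm_map (Matrix.toEuclideanLin A x - E • x)
    rw [← sq_eq_sq₀ (norm_nonneg _) (norm_nonneg _), EuclideanSpace.real_norm_sq_eq,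
      EuclideanSpace.real_norm_sq_eq] at this
    refine Eq.trans ?_ (this.symm.trans ?_)
    · rfl
    · refine Finset.sum_congr rfl fun i _ => ?_
      congr 1
      rw [map_sub, map_smul, PiLp.sub_apply, PiLp.smul_apply,
        LinearMap.IsSymmetric.eigenvectorBasis_apply_self_apply]
      simp; ring
  rw [e1, e2, Finset.mul_sum]
  refine Finset.sum_le_sum fun i _ => ?_
  rw [mul_pow]
  refine mul_le_mul_of_nonneg_right ?_ (sq_nonneg _)
  rw [← sq_abs (_ - E)]
  exact pow_le_pow_left₀ hδ (h _ (Finset.mem_image_of_mem _ (Finset.mem_univ i))) 2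

/-- The Dirichlet restriction of `H_U` to `{c, …, c + q - 1}`. -/
def dirichlet (U : ℤ → ℝ) (c : ℤ) (q : ℕ) : Matrix (Fin q) (Fin q) ℝ :=
  fun r s => (if s = r then U (c + r) else 0) + (if (s : ℕ) + 1 = r then 1 else 0)
    + (if (r : ℕ) + 1 = s then 1 else 0)

lemma dirichlet_isHermitian (U : ℤ → ℝ) (c : ℤ) (q : ℕ) : (dirichlet U c q).IsHermitian := by
  ext r s
  simp only [Matrix.conjTranspose_apply, dirichlet, star_trivial]
  by_cases h : r = s
  · subst h; simp
  · rw [if_neg h, if_neg (Ne.symm h)]; ring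

lemma dirichlet_mulVec (U : ℤ → ℝ) (c : ℤ) {q : ℕ} (F : ℤ → ℝ) (r : Fin q) :
    (dirichlet U c q).mulVec (fun s => F s) r = U (c + r) * F r
      + (if (r : ℕ) = 0 then 0 else F (r - 1)) + (if (r : ℕ) + 1 = q then 0 else F (r + 1)) := by
  simp only [Matrix.mulVec, dotProduct, dirichlet, add_mul, Finset.sum_add_distrib, ite_mul,
    zero_mul, one_mul, Finset.sum_ite_eq', Finset.mem_univ, if_true]
  congr 1
  · congr 1
    split_ifs with h
    · exact Finset.sum_eq_zero fun s _ => if_neg (by omega)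
    · rw [Finset.sum_eq_single ⟨r - 1, by omega⟩, if_pos (by simp; omega)]
      · congr 1; simp; omega
      · intro s _ hs
        refine if_neg fun h' => hs (Fin.ext ?_)
        simp; omega
      · simp
  · split_ifs with h
    · exact Finset.sum_eq_zero fun s _ => if_neg (by omega)
    · rw [Finset.sum_eq_single ⟨r + 1, by omega⟩, if_pos (by simp)]
      · congr 1
      · intro s _ hs
        refine if_neg fun h' => hs (Fin.ext ?_)
        simp; omega
      · simp

/-- The indicator function of a set of integers, as a bounded function. -/
def indB (A : Set ℤ) : ℤ →ᵇ ℝ :=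
  BoundedContinuousFunction.ofNormedAddCommGroupDiscrete (A.indicator 1) 1 (fun n => by
    by_cases h : n ∈ A <;> simp [h])

open Classical in
lemma indB_apply (A : Set ℤ) (n : ℤ) : indB A n = if n ∈ A then 1 else 0 := by
  change A.indicator 1 n = _
  simp [Set.indicator]

lemma ell2_norm_sq_blocks (f : Ell2) (c : ℤ) (q : ℕ) [NeZero q] :
    HasSum (fun i : ℤ => ∑ r : Fin q, f (c + i * q + r) ^ 2) (‖f‖ ^ 2) := by
  have h1 : HasSum (fun p : ℤ × Fin q => f (c + p.1 * q + p.2) ^ 2) (‖f‖ ^ 2) := by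
    have := (((Int.divModEquiv q).symm.trans (Equiv.addLeft c)).hasSum_iff).2 (ell2_hasSum f)
    convert this using 1
    ext p
    simp [add_assoc]
  exact h1.prod_fiberwise fun i => hasSum_fintype _

/-- Cutting the bonds `(c + iq - 1, c + iq)`, `i ∈ ℤ`, decouples a `q`-periodic operator into
copies of one finite matrix, whose spectrum is `S`. -/
lemma decouple (U : ℤ →ᵇ ℝ) {q : ℕ} (hq : 0 < q) (hU : ∀ n, U (n + q) = U n) (c : ℤ) :
    ∃ S : Finset ℝ, S.card ≤ q ∧ ∀ (f : Ell2) (E δ : ℝ), 0 ≤ δ → (∀ s ∈ S, δ ≤ |s - E|) →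
      δ * ‖f‖ ≤ ‖schr U E f‖ + ‖mulOp (indB {n | (q : ℤ) ∣ n - c}) f‖
        + ‖mulOp (indB {n | (q : ℤ) ∣ n + 1 - c}) f‖ := by
  have : NeZero q := ⟨hq.ne'⟩
  obtain ⟨S, hS, hbd⟩ := symm_matrix_bound _ (dirichlet_isHermitian U c q)
  refine ⟨S, hS, fun f E δ hδ h => ?_⟩
  set f0 := mulOp (indB {n | (q : ℤ) ∣ n - c}) f with hf0
  set f1 := mulOp (indB {n | (q : ℤ) ∣ n + 1 - c}) f with hf1
  set G := schr U E f - shiftOp 1 f0 - shiftOp (-1) f1 with hG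
  have key : δ * ‖f‖ ≤ ‖G‖ := by
    rw [← sq_le_sq₀ (by positivity) (norm_nonneg _), mul_pow]
    refine hasSum_le (fun i => ?_) ((ell2_norm_sq_blocks f c q).mul_left (δ ^ 2))
      (ell2_norm_sq_blocks G c q)
    refine (hbd (fun r => f (c + i * q + r)) E δ hδ h).trans_eq ?_
    refine Finset.sum_congr rfl fun r _ => ?_
    congr 1
    rw [dirichlet_mulVec U c (fun s => f (c + i * q + s)) r]
    simp only [hG, ell2_sub_apply, shiftOp_apply, schr_apply, hf0, hf1, mulOp_apply, indB_apply,
      Set.mem_ofPred_eq]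
    have hUr : U (c + i * q + r) = U (c + r) := by
      rw [← periodic_mul hU i (c + r)]; congr 1; ring
    rw [hUr]
    have d1 : (q : ℤ) ∣ c + i * q + r + 1 - c ↔ (r : ℕ) + 1 = q := by
      rw [show c + i * (q : ℤ) + r + 1 - c = ((r : ℕ) + 1 : ℕ) + q * i by push_cast; ring,
        Int.dvd_add_left (dvd_mul_right _ _), Int.natCast_dvd_natCast]
      refine ⟨fun hd => ?_, fun hd => by rw [hd]⟩
      have := Nat.le_of_dvd (by omega) hd
      omega
    have d2 : (q : ℤ) ∣ c + i * q + r + -1 + 1 - c ↔ (r : ℕ) = 0 := by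
      rw [show c + i * (q : ℤ) + r + -1 + 1 - c = ((r : ℕ) : ℤ) + q * i by ring,
        Int.dvd_add_left (dvd_mul_right _ _), Int.natCast_dvd_natCast]
      refine ⟨fun hd => Nat.eq_zero_of_dvd_of_lt hd r.2, fun hd => by rw [hd]; exact dvd_zero _⟩
    simp only [d1, d2]
    have a1 : c + i * (q : ℤ) + (r - 1) = c + i * q + r - 1 := by ring
    have a2 : c + i * (q : ℤ) + (r + 1) = c + i * q + r + 1 := by ring
    have a3 : c + i * (q : ℤ) + r + -1 = c + i * q + r - 1 := by ring
    rw [a1, a2, a3]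
    split_ifs <;> ring
  have n1 : ‖G‖ ≤ ‖schr U E f‖ + ‖f0‖ + ‖f1‖ := by
    have e1 := norm_sub_le (schr U E f - shiftOp 1 f0) (shiftOp (-1) f1)
    have e2 := norm_sub_le (schr U E f) (shiftOp 1 f0)
    rw [LinearIsometry.norm_map] at e1 e2
    linarith
  exact key.trans n1

/-! ### Spectra of concatenated periodic potentials -/

lemma approx_eigenvector {U : ℤ →ᵇ ℝ} {E : ℝ} (hE : E ∈ SchrodingerSpectrum U) {ε : ℝ}
    (hε : 0 < ε) : ∃ f : Ell2, ‖f‖ = 1 ∧ ‖schr U E f‖ ≤ ε := by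
  by_contra! hcon
  refine (notMem_spectrum_iff U E).2 ⟨ε, hε, fun f => ?_⟩ hE
  rcases eq_or_ne f 0 with rfl | hf
  · simp
  have hn : 0 < ‖f‖ := norm_pos_iff.2 hf
  have h1 := hcon (‖f‖⁻¹ • f) (by rw [norm_smul, norm_inv, norm_norm, inv_mul_cancel₀ hn.ne'])
  rw [map_smul, norm_smul, norm_inv, norm_norm, ← div_eq_inv_mul, lt_div_iff₀ hn] at h1
  exact h1.le

lemma mulOp_indB_le {κ : ℝ} (hκ : 0 < κ) {ρ : ℤ → ℕ} {M : ℕ} (hM : ∀ n, ρ n ≤ M) {D : ℕ}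
    (hD : 1 < (1 + κ) ^ D) {A : Set ℤ} (hA : ∀ n ∈ A, D ≤ ρ n) {f : Ell2}
    (hf : ‖mulOp (weight κ hκ.le ρ M hM) f‖ ≤ 1) :
    ‖mulOp (indB A) f‖ ≤ 1 / ((1 + κ) ^ D - 1) := by
  have hpos : 0 < (1 + κ) ^ D - 1 := by linarith
  have : ‖mulOp (indB A) f‖ ≤ ‖((1 + κ) ^ D - 1)⁻¹ • mulOp (weight κ hκ.le ρ M hM) f‖ := by
    apply ell2_norm_le
    intro n
    rw [ell2_smul_apply, mulOp_apply, mulOp_apply, indB_apply, weight_apply]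
    split_ifs with h
    · have h1 : (1 + κ) ^ D ≤ (1 + κ) ^ ρ n := pow_le_pow_right₀ (by linarith) (hA n h)
      rw [one_mul, ← mul_assoc, abs_mul]
      refine le_mul_of_one_le_left (abs_nonneg _) (le_abs.2 (Or.inl ?_))
      rw [← div_eq_inv_mul, one_le_div hpos]
      linarith
    · rw [zero_mul, abs_zero]; exact abs_nonneg _
  refine this.trans ?_
  rw [norm_smul, norm_inv, Real.norm_eq_abs, abs_of_pos hpos, one_div]
  exact mul_le_of_le_one_right (by positivity) hf

/-- Consider a potential of period `J · 2h`, divided into stretches of length `2h`. If on the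
stretches number `j` (modulo `J`) it agrees with a potential having a gap at the spectral value
`E`, then `E` is exponentially close to one of at most `2 J² h` eigenvalues of Dirichlet
restrictions. -/
lemma localization {h J : ℕ} (hh : 0 < h) (hJ : 0 < J) {U : ℤ →ᵇ ℝ}
    (hU : ∀ n, U (n + (J * (2 * h) : ℕ)) = U n) :
    ∃ S : Finset ℝ, S.card ≤ J * (J * (2 * h)) ∧ ∀ E ∈ SchrodingerSpectrum U, ∀ j : ℕ, j < J →
      ∀ (U' : ℤ →ᵇ ℝ) (η : ℝ), 0 < η → 2 ≤ (1 + η / 8) ^ h →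
      (∀ f, η * ‖f‖ ≤ ‖schr U' E f‖) →
      (∀ n : ℤ, (n / (2 * h : ℕ)) % (J : ℤ) = j → U n = U' n) →
      ∃ s ∈ S, |E - s| < 6 / (1 + η / 8) ^ h := by
  classical
  have hq : 0 < J * (2 * h) := by positivity
  choose S hS hbd using fun j : ℕ => decouple U hq hU ((j * (2 * h) + h : ℕ) : ℤ)
  refine ⟨(Finset.range J).biUnion S, ?_, fun E hE j hj U' η hη h2 hgap heq => ?_⟩
  · refine (Finset.card_biUnion_le_card_mul _ _ _ fun j _ => hS j).trans ?_
    rw [Finset.card_range]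
  set κ := η / 8 with hκd
  have hκ : 0 < κ := by positivity
  set A := (1 + κ) ^ h with hA
  by_contra! hcon
  have hcon' : ∀ s ∈ S j, 6 / A ≤ |s - E| := fun s hs => by
    rw [abs_sub_comm]
    exact hcon s (Finset.mem_biUnion.2 ⟨j, Finset.mem_range.2 hj, hs⟩)
  set L : ℤ := ((2 * h : ℕ) : ℤ) with hL
  have hLpos : 0 < L := by rw [hL]; exact_mod_cast (by positivity : 0 < 2 * h)
  set ρ : ℤ → ℕ := fun n => if (n / L) % (J : ℤ) = j then
    min ((n % L).toNat + 1) (2 * h - (n % L).toNat) else 0 with hρ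
  have hmod : ∀ n, 0 ≤ n % L ∧ n % L < L := fun n =>
    ⟨Int.emod_nonneg _ hLpos.ne', Int.emod_lt_of_pos _ hLpos⟩
  have hM : ∀ n, ρ n ≤ 2 * h := by
    intro n; simp only [hρ]; split_ifs <;> omega
  -- passing from `n` to `n + 1` either stays within a stretch or crosses its end
  have hstep : ∀ n : ℤ, ((n + 1) / L = n / L ∧ (n + 1) % L = n % L + 1) ∨
      (n % L = L - 1 ∧ (n + 1) % L = 0) := by
    intro n
    have e := Int.emod_add_mul_ediv n L
    rcases lt_or_ge (n % L + 1) L with hlt | hge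
    · left
      have e' : n + 1 = (n % L + 1) + L * (n / L) := by linarith
      constructor
      · rw [e', Int.add_mul_ediv_left _ _ hLpos.ne', Int.ediv_eq_zero_of_lt (by linarith [hmod n])
          hlt, zero_add]
      · rw [e', Int.add_mul_emod_self_left, Int.emod_eq_of_lt (by linarith [hmod n]) hlt]
    · right
      have e1 : n % L = L - 1 := by linarith [hmod n]
      refine ⟨e1, ?_⟩
      have e' : n + 1 = L * (n / L + 1) := by linarith
      rw [e', Int.mul_emod_right]
  have hlip : ∀ n, ρ (n + 1) ≤ ρ n + 1 ∧ ρ n ≤ ρ (n + 1) + 1 := by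
    intro n
    have hm := hmod n
    simp only [hρ]
    rcases hstep n with ⟨e1, e2⟩ | ⟨e1, e2⟩
    · rw [e1, e2]; split_ifs <;> omega
    · rw [e1, e2]; split_ifs <;> omega
  have hUeq : ∀ n, 0 < ρ n → U n = U' n := by
    intro n hn
    apply heq
    by_contra hne
    simp only [hρ, if_neg hne, lt_irrefl] at hn
  have hdiv : ∀ (i : ℤ) (r : ℤ), 0 ≤ r → r < L →
      ((((j : ℤ) + i * J) * L + r) / L) % (J : ℤ) = j ∧ (((j : ℤ) + i * J) * L + r) % L = r := by
    intro i r hr0 hr1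
    rw [add_comm, Int.add_mul_ediv_right _ _ hLpos.ne', Int.ediv_eq_zero_of_lt hr0 hr1, zero_add,
      Int.add_mul_emod_self_right, Int.add_mul_emod_self_right, Int.emod_eq_of_lt hr0 hr1]
    exact ⟨Int.emod_eq_of_lt (by omega) (by omega), rfl⟩
  have hD0 : ∀ n ∈ {n : ℤ | ((J * (2 * h) : ℕ) : ℤ) ∣ n - ((j * (2 * h) + h : ℕ) : ℤ)},
      h ≤ ρ n := by
    rintro n ⟨i, hi⟩
    have e : n = ((j : ℤ) + i * J) * L + h := by
      rw [hL]; push_cast at hi ⊢; linarith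
    have := hdiv i h (by omega) (by omega)
    simp only [hρ]
    rw [e, this.1, this.2, if_pos rfl]
    omega
  have hD1 : ∀ n ∈ {n : ℤ | ((J * (2 * h) : ℕ) : ℤ) ∣ n + 1 - ((j * (2 * h) + h : ℕ) : ℤ)},
      h ≤ ρ n := by
    rintro n ⟨i, hi⟩
    have e : n = ((j : ℤ) + i * J) * L + (h - 1) := by
      rw [hL]; push_cast at hi ⊢; linarith
    have := hdiv i (h - 1) (by omega) (by omega)
    simp only [hρ]
    rw [e, this.1, this.2, if_pos rfl]
    omega
  have hA0 : 0 < A := by linarith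
  have hB : 0 < (1 + κ) ^ (2 * h) := by positivity
  obtain ⟨f, hf, hfs⟩ := approx_eigenvector hE
    (show 0 < min (η / 2 / (1 + κ) ^ (2 * h)) (1 / A) from lt_min (by positivity) (by positivity))
  have hdec := decay hη hgap hM (fun n => (hlip n).1) (fun n => (hlip n).2) hUeq hf (by
    have := hfs.trans (min_le_left _ _)
    rw [le_div_iff₀ hB] at this
    rw [mul_comm]; exact this)
  have i0 := mulOp_indB_le hκ hM (by linarith : 1 < A) hD0 hdec
  have i1 := mulOp_indB_le hκ hM (by linarith : 1 < A) hD1 hdec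
  have hfin := hbd j f E (6 / A) (by positivity) hcon'
  have i2 := hfs.trans (min_le_right _ _)
  have i3 : 1 / (A - 1) ≤ 2 / A := by
    rw [div_le_div_iff₀ (by linarith) hA0]; linarith
  rw [hf, mul_one] at hfin
  have : 6 / A ≤ 1 / A + 2 / A + 2 / A := by
    change _ ≤ 1 / (A - 1) at i0
    change _ ≤ 1 / (A - 1) at i1
    linarith
  rw [← add_div, ← add_div, div_le_div_iff_of_pos_right hA0] at this
  norm_num at this

/-! ### Efficient covers of the spectrum -/

/-- `t` has a finite cover by intervals whose diameters `d` satisfy `∑ d^(1/(m+1)) < 1/(m+1)`. -/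
def SmallCover (m : ℕ) (t : Set ℝ) : Prop :=
  ∃ (ι : Type) (_ : Fintype ι) (c r : ι → ℝ), (∀ i, 0 < r i) ∧
    t ⊆ ⋃ i, Metric.ball (c i) (r i) ∧ ∑ i, (2 * r i) ^ (1 / ((m : ℝ) + 1)) < 1 / ((m : ℝ) + 1)

lemma common_period (F : Finset (ℤ →ᵇ ℝ)) (hF : ∀ V ∈ F, IsPeriodicSeq V) :
    ∃ P : ℕ, 0 < P ∧ ∀ V ∈ F, ∀ n, V (n + P) = V n := by
  classical
  induction F using Finset.induction_on with
  | empty => exact ⟨1, one_pos, by simp⟩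
  | insert V F _ ih =>
    obtain ⟨P, hP, h⟩ := ih fun V' hV' => hF V' (Finset.mem_insert_of_mem hV')
    obtain ⟨q, hq, hV⟩ := hF V (Finset.mem_insert_self _ _)
    refine ⟨P * q, Nat.mul_pos hP hq, fun V' hV' n => ?_⟩
    rcases Finset.mem_insert.1 hV' with rfl | hV'
    · have := periodic_mul hV P n
      push_cast; exact this
    · have := periodic_mul (h V' hV') q n
      push_cast; rw [mul_comm]; exact this

/-- Finitely many periodic perturbations of `V` suffice to open a gap at every energy of a
compact set avoiding the exceptional energies. -/
lemma finite_gap_family {k : ℕ} (hk : 0 < k) (b : Fin (k - 1) → ℝ) {V : ℤ →ᵇ ℝ}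
    (hV : IsPeriodicSeq V) {ε : ℝ} (hε : 0 < ε) {K : Set ℝ} (hK : IsCompact K)
    (hKb : ∀ E ∈ K, blockMat k b E 0 0 ≠ 0) :
    ∃ (F : Finset (ℤ →ᵇ ℝ)) (η : ℝ), 0 < η ∧ (∀ W ∈ F, IsPeriodicSeq W ∧ ‖W - V‖ ≤ ε) ∧
      ∀ E ∈ K, ∃ W ∈ F, ∀ f, η * ‖f‖ ≤ ‖schr (sieveB k b W) E f‖ := by
  classical
  refine hK.induction_on (p := fun K => ∃ (F : Finset (ℤ →ᵇ ℝ)) (η : ℝ), 0 < η ∧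
    (∀ W ∈ F, IsPeriodicSeq W ∧ ‖W - V‖ ≤ ε) ∧
      ∀ E ∈ K, ∃ W ∈ F, ∀ f, η * ‖f‖ ≤ ‖schr (sieveB k b W) E f‖) ?_ ?_ ?_ ?_
  · exact ⟨∅, 1, one_pos, by simp, by simp⟩
  · rintro s t hst ⟨F, η, hη, h1, h2⟩
    exact ⟨F, η, hη, h1, fun E hE => h2 E (hst hE)⟩
  · rintro s t ⟨F, η, hη, h1, h2⟩ ⟨F', η', hη', h1', h2'⟩
    refine ⟨F ∪ F', min η η', lt_min hη hη', fun W hW => ?_, fun E hE => ?_⟩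
    · rcases Finset.mem_union.1 hW with h | h
      exacts [h1 W h, h1' W h]
    · rcases hE with h | h
      · obtain ⟨W, hW, hb⟩ := h2 E h
        exact ⟨W, Finset.mem_union_left _ hW, fun f =>
          (mul_le_mul_of_nonneg_right (min_le_left _ _) (norm_nonneg _)).trans (hb f)⟩
      · obtain ⟨W, hW, hb⟩ := h2' E h
        exact ⟨W, Finset.mem_union_right _ hW, fun f =>
          (mul_le_mul_of_nonneg_right (min_le_right _ _) (norm_nonneg _)).trans (hb f)⟩
  · intro E hE
    obtain ⟨W, hWp, hWV, c, hc, hb⟩ := gap_dense hk b hV (hKb E hE) hε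
    refine ⟨Metric.ball E (c / 2), mem_nhdsWithin_of_mem_nhds (Metric.ball_mem_nhds _ (by positivity)),
      {W}, c / 2, by positivity, by simpa using ⟨hWp, hWV⟩, fun E' hE' => ⟨W, by simp, fun f => ?_⟩⟩
    have h1 := bddBelow_pert (U' := sieveB k b W) (E' := E') hb f
    rw [sub_self, norm_zero, sub_zero] at h1
    refine le_trans ?_ h1
    refine mul_le_mul_of_nonneg_right ?_ (norm_nonneg _)
    rw [Metric.mem_ball, Real.dist_eq] at hE'
    linarith

lemma exists_tau (C : ℝ) {d e : ℝ} (hd : 0 < d) (he : 0 < e) : ∃ τ : ℝ, 0 < τ ∧ C * (2 * τ) ^ d < e := by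
  have hc : ContinuousAt (fun τ : ℝ => C * (2 * τ) ^ d) 0 := by
    have : ContinuousAt (fun τ : ℝ => (2 * τ) ^ d) 0 :=
      ContinuousAt.rpow_const (by fun_prop) (Or.inr hd.le)
    exact this.const_mul C
  have h1 : ∀ᶠ τ in nhds (0 : ℝ), C * (2 * τ) ^ d < e :=
    hc.eventually_lt continuousAt_const (by simpa [Real.zero_rpow hd.ne'] using he)
  obtain ⟨τ, h2, h3⟩ := ((h1.filter_mono nhdsWithin_le_nhds).and
    (self_mem_nhdsWithin (s := Set.Ioi (0 : ℝ)))).exists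
  exact ⟨τ, h3, h2⟩

lemma tendsto_cover_sum (C : ℝ) {κ d : ℝ} (hκ : 0 < κ) (hd : 0 < d) :
    Filter.Tendsto (fun h : ℕ => C * (h : ℝ) * (2 * (6 / (1 + κ) ^ h)) ^ d) Filter.atTop
      (nhds 0) := by
  set x : ℝ := ((1 + κ)⁻¹) ^ d with hx
  have hx0 : 0 ≤ x := by positivity
  have hx1 : x < 1 := Real.rpow_lt_one (by positivity) (inv_lt_one_of_one_lt₀ (by linarith)) hd
  have h1 := tendsto_self_mul_const_pow_of_lt_one hx0 hx1
  have h2 := h1.const_mul (C * 12 ^ d)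
  rw [mul_zero] at h2
  refine h2.congr fun h => ?_
  have : (2 * (6 / (1 + κ) ^ h)) ^ d = 12 ^ d * x ^ h := by
    rw [show 2 * (6 / (1 + κ) ^ h) = 12 * ((1 + κ)⁻¹) ^ h by rw [inv_pow]; ring,
      Real.mul_rpow (by norm_num) (by positivity), hx, ← Real.rpow_natCast, ← Real.rpow_natCast,
      ← Real.rpow_mul (by positivity), ← Real.rpow_mul (by positivity), mul_comm d]
  rw [this]; ring

/-- Potentials with efficiently covered spectrum approximate any periodic one. -/
lemma cover_dense {k : ℕ} (hk : 0 < k) (b : Fin (k - 1) → ℝ) (m : ℕ) {V : ℤ →ᵇ ℝ}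
    (hV : IsPeriodicSeq V) {ε : ℝ} (hε : 0 < ε) :
    ∃ W : ℤ →ᵇ ℝ, IsPeriodicSeq W ∧ ‖W - V‖ ≤ ε ∧
      SmallCover m (SchrodingerSpectrum (sieveWith W k b)) := by
  classical
  set d : ℝ := 1 / ((m : ℝ) + 1) with hd
  have hd0 : 0 < d := by positivity
  set X := (exceptional_finite k b).toFinset with hX
  obtain ⟨τ, hτ, hτX⟩ := exists_tau (X.card : ℝ) hd0 (half_pos hd0)
  set R : ℝ := 2 + (‖V‖ + ε + ∑ i, |b i|) with hR
  set K : Set ℝ := Set.Icc (-R) R \ ⋃ x ∈ X, Metric.ball x τ with hKdef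
  have hK : IsCompact K :=
    isCompact_Icc.diff (isOpen_biUnion fun x _ => Metric.isOpen_ball)
  obtain ⟨F, η, hη, hF, hgap⟩ := finite_gap_family hk b hV hε hK (by
    intro E hE h0
    refine hE.2 (Set.mem_iUnion₂.2 ⟨E, ?_, Metric.mem_ball_self hτ⟩)
    rw [hX, Set.Finite.mem_toFinset]; exact h0)
  -- adding `V` itself makes the family nonempty
  have hF' : ∀ W ∈ insert V F, IsPeriodicSeq W ∧ ‖W - V‖ ≤ ε := by
    intro W hW
    rcases Finset.mem_insert.1 hW with rfl | hW
    · exact ⟨hV, by simpa using hε.le⟩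
    · exact hF W hW
  obtain ⟨P, hP, hper⟩ := common_period (insert V F) fun W hW => (hF' W hW).1
  set J := (insert V F).card with hJdef
  have hJ : 0 < J := Finset.card_pos.2 ⟨V, Finset.mem_insert_self _ _⟩
  set v : ℕ → (ℤ →ᵇ ℝ) := fun j =>
    if h : j < J then ((insert V F).equivFin.symm ⟨j, h⟩ : ℤ →ᵇ ℝ) else V with hv
  have hvF : ∀ j, v j ∈ insert V F := by
    intro j; simp only [hv]; split_ifs with h
    · exact Finset.coe_mem _
    · exact Finset.mem_insert_self _ _
  have hvs : ∀ W ∈ F, ∃ j < J, v j = W := by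
    intro W hW
    set i := (insert V F).equivFin ⟨W, Finset.mem_insert_of_mem hW⟩ with hi
    refine ⟨i, i.2, ?_⟩
    simp only [hv]
    rw [dif_pos i.2]
    simp [hi]
  -- a large number `N` of periods per stretch
  have hkP : 0 < k * P := Nat.mul_pos hk hP
  have hmono : Filter.Tendsto (fun N : ℕ => k * P * N) Filter.atTop Filter.atTop :=
    Filter.tendsto_id.const_mul_atTop' hkP
  have ev1 := ((tendsto_cover_sum (2 * J ^ 2 : ℝ) (by positivity : 0 < η / 8) hd0).comp
    hmono).eventually (gt_mem_nhds (half_pos hd0))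
  have ev2 := ((tendsto_pow_atTop_atTop_of_one_lt (by linarith : 1 < 1 + η / 8)).comp
    hmono).eventually_ge_atTop 2
  obtain ⟨N, ⟨hN1, hN2⟩, hN⟩ := ((ev1.and ev2).and (Filter.eventually_gt_atTop 0)).exists
  simp only [Function.comp] at hN1 hN2
  set h := k * P * N with hh
  have hhpos : 0 < h := by positivity
  set L : ℕ := 2 * (P * N) with hL
  have hLpos : (0 : ℤ) < L := by exact_mod_cast (by positivity : 0 < L)
  set w : ℤ → ℝ := fun n => v (((n / L) % (J : ℤ)).toNat) n with hw
  have hwV : ∀ n, |w n - V n| ≤ ε := fun n =>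
    ((v (((n / L) % (J : ℤ)).toNat) - V).norm_coe_le_norm n).trans (hF' _ (hvF _)).2
  have hwb : ∀ n, ‖w n‖ ≤ ‖V‖ + ε := by
    intro n
    have h1 := V.norm_coe_le_norm n
    have h2 := hwV n
    rw [← Real.norm_eq_abs] at h2
    calc ‖w n‖ = ‖V n + (w n - V n)‖ := by ring_nf
      _ ≤ _ := norm_add_le _ _
      _ ≤ _ := by linarith
  have hwper : ∀ n, w (n + (J * L : ℕ)) = w n := by
    intro n
    simp only [hw]
    have e1 : (n + (J * L : ℕ)) / (L : ℤ) = n / L + J := by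
      push_cast; rw [Int.add_mul_ediv_right _ _ hLpos.ne']
    rw [e1, Int.add_emod_right]
    have := periodic_mul (hper _ (hvF (((n / L) % (J : ℤ)).toNat))) (J * (2 * N)) n
    rw [← this]
    congr 1
    rw [hL]; push_cast; ring
  set W : ℤ →ᵇ ℝ := BoundedContinuousFunction.ofNormedAddCommGroupDiscrete w _ hwb with hW
  have hJL : 0 < J * L := Nat.mul_pos hJ (by exact_mod_cast hLpos)
  refine ⟨W, ⟨J * L, hJL, hwper⟩,
    (BoundedContinuousFunction.norm_le hε.le).2 fun n => hwV n, ?_⟩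
  have hsper : ∀ n, sieveB k b W (n + (J * (2 * h) : ℕ)) = sieveB k b W n := by
    intro n
    have := sieveWith_periodic hk b hwper n
    rw [show k * (J * L) = J * (2 * h) by rw [hh, hL]; ring] at this
    exact this
  obtain ⟨S, hS, hloc⟩ := localization hhpos hJ hsper
  have hWn : ‖W‖ ≤ ‖V‖ + ε :=
    (BoundedContinuousFunction.norm_le (by positivity)).2 fun n => hwb n
  have hr : 0 < 6 / (1 + η / 8) ^ h := by positivity
  refine ⟨X ⊕ S, inferInstance, Sum.elim (fun x => x) (fun s => s),
    Sum.elim (fun _ => τ) (fun _ => 6 / (1 + η / 8) ^ h), ?_, ?_, ?_⟩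
  · rintro (i | i)
    exacts [hτ, hr]
  · intro E hE
    by_cases hEX : E ∈ ⋃ x ∈ X, Metric.ball x τ
    · obtain ⟨x, hx, hx'⟩ := Set.mem_iUnion₂.1 hEX
      exact Set.mem_iUnion.2 ⟨Sum.inl ⟨x, hx⟩, hx'⟩
    · have hEb : |E| ≤ R := by
        have h1 := spectrum_bound (U := sieveB k b W) hE
        have h2 := sieveB_norm_le k b W
        linarith
      obtain ⟨V', hV', hg⟩ := hgap E ⟨abs_le.1 hEb, hEX⟩
      obtain ⟨j, hj, rfl⟩ := hvs V' hV'
      obtain ⟨s, hs, hlt⟩ := hloc E hE j hj (sieveB k b (v j)) η hη hN2 hg (by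
        intro n hn
        refine sieveWith_congr hk b rfl ?_
        have e : n / (k : ℤ) / (L : ℤ) = n / (2 * h : ℕ) := by
          rw [Int.ediv_ediv_of_nonneg (by positivity)]
          congr 1; rw [hh, hL]; push_cast; ring
        change v (((n / (k : ℤ) / (L : ℤ)) % (J : ℤ)).toNat) (n / k) = v j (n / k)
        rw [e, hn, Int.toNat_natCast])
      exact Set.mem_iUnion.2 ⟨Sum.inr ⟨s, hs⟩, by simpa [Real.dist_eq] using hlt⟩
  · rw [Fintype.sum_sum_type]
    simp only [Sum.elim_inl, Sum.elim_inr, Finset.sum_const, Finset.card_univ, Fintype.card_coe,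
      nsmul_eq_mul]
    rw [← hd]
    have : (S.card : ℝ) ≤ 2 * J ^ 2 * h := by
      have : (S.card : ℝ) ≤ (J * (J * (2 * h)) : ℕ) := by exact_mod_cast hS
      refine this.trans_eq ?_
      push_cast; ring
    have h3 := mul_le_mul_of_nonneg_right this
      (by positivity : 0 ≤ (2 * (6 / (1 + η / 8) ^ h)) ^ d)
    linarith

/-! ### Genericity -/

lemma dimH_eq_zero_of_smallCover {s : Set ℝ} (h : ∀ m, SmallCover m s) : dimH s = 0 := by
  choose ι hι c r hr hcov hsum using h
  have hterm : ∀ m i, (2 * r m i) ^ (1 / ((m : ℝ) + 1)) < 1 / ((m : ℝ) + 1) := fun m i =>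
    (Finset.single_le_sum (f := fun i => (2 * r m i) ^ (1 / ((m : ℝ) + 1)))
      (fun j _ => by have := hr m j; positivity) (Finset.mem_univ i)).trans_lt (hsum m)
  have hsmall : ∀ m i, 2 * r m i ≤ 1 / ((m : ℝ) + 1) := by
    intro m i
    have h1 := hterm m i
    have hp : (0 : ℝ) < (m : ℝ) + 1 := by positivity
    have hle : 1 / ((m : ℝ) + 1) ≤ 1 := by
      rw [div_le_one hp]; linarith [(Nat.cast_nonneg m : (0 : ℝ) ≤ m)]
    have hpos := hr m i
    by_contra! hlt
    rcases le_or_gt (2 * r m i) 1 with h2 | h2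
    · have := Real.rpow_le_rpow_of_exponent_ge (by positivity) h2 hle
      rw [Real.rpow_one] at this
      linarith
    · have := Real.one_le_rpow h2.le (by positivity : 0 ≤ 1 / ((m : ℝ) + 1))
      linarith
  have hdiam : ∀ m i, Metric.ediam (Metric.ball (c m i) (r m i)) = ENNReal.ofReal (2 * r m i) := by
    intro m i
    rw [Real.ball_eq_Ioo, Real.ediam_Ioo]; congr 1; ring
  have hle : ∀ d : NNReal, 0 < d → dimH s ≤ d := by
    intro d hd
    apply dimH_le_of_hausdorffMeasure_ne_top
    have hd' : (0 : ℝ) < d := hd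
    have hlim := tendsto_one_div_add_atTop_nhds_zero_nat (𝕜 := ℝ)
    have hbound : μH[(d : ℝ)] s ≤ 1 := by
      refine (Measure.hausdorffMeasure_le_liminf_sum (l := Filter.atTop) (d : ℝ) s
        (fun m : ℕ => ENNReal.ofReal (1 / ((m : ℝ) + 1))) ?_
        (fun m i => Metric.ball (c m i) (r m i)) ?_ ?_).trans ?_
      · simpa using ENNReal.tendsto_ofReal hlim
      · exact Filter.Eventually.of_forall fun m i => by
          rw [hdiam]; exact ENNReal.ofReal_le_ofReal (hsmall m i)
      · exact Filter.Eventually.of_forall hcov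
      · refine Filter.liminf_le_of_frequently_le' (Filter.Eventually.frequently ?_)
        filter_upwards [hlim.eventually (gt_mem_nhds hd')] with m hm
        have hp : (0 : ℝ) < (m : ℝ) + 1 := by positivity
        have hle : 1 / ((m : ℝ) + 1) ≤ 1 := by
          rw [div_le_one hp]; linarith [(Nat.cast_nonneg m : (0 : ℝ) ≤ m)]
        calc ∑ i, Metric.ediam (Metric.ball (c m i) (r m i)) ^ (d : ℝ)
            = ∑ i, ENNReal.ofReal ((2 * r m i) ^ (d : ℝ)) :=
              Finset.sum_congr rfl fun i _ => by
                have := hr m i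
                rw [hdiam, ENNReal.ofReal_rpow_of_pos (by positivity)]
          _ = ENNReal.ofReal (∑ i, (2 * r m i) ^ (d : ℝ)) :=
              (ENNReal.ofReal_sum_of_nonneg fun i _ => by have := hr m i; positivity).symm
          _ ≤ ENNReal.ofReal 1 := by
              refine ENNReal.ofReal_le_ofReal (le_trans (Finset.sum_le_sum fun i _ => ?_)
                ((hsum m).le.trans hle))
              have := hr m i
              exact Real.rpow_le_rpow_of_exponent_ge (by positivity)
                ((hsmall m i).trans hle) hm.le
          _ = 1 := ENNReal.ofReal_one
    exact ne_top_of_le_ne_top ENNReal.one_ne_top hbound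
  refine le_antisymm (ENNReal.le_of_forall_pos_le_add fun ε hε _ => ?_) zero_le
  rw [zero_add]
  exact hle ε hε

lemma smallCover_isOpen {k : ℕ} (hk : 0 < k) (b : Fin (k - 1) → ℝ) (m : ℕ) :
    IsOpen {V : ℤ →ᵇ ℝ | SmallCover m (SchrodingerSpectrum (sieveWith V k b))} := by
  rw [Metric.isOpen_iff]
  rintro V ⟨ι, hι, c, r, hr, hcov, hsum⟩
  obtain ⟨δ, hδ, hth⟩ := (spectrum_isCompact (sieveB k b V)).exists_thickening_subset_open
    (isOpen_iUnion fun i => Metric.isOpen_ball) hcov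
  refine ⟨δ, hδ, fun V' hV' => ⟨ι, hι, c, r, hr, fun E hE => hth ?_, hsum⟩⟩
  rw [Metric.mem_ball, dist_eq_norm] at hV'
  obtain ⟨E', hE', hd⟩ := spectrum_near (U := sieveB k b V) (U' := sieveB k b V')
    ((sieveB_sub_le hk b V V').trans_lt hV') hE
  exact Metric.mem_thickening_iff.2 ⟨E', hE', by rwa [dist_comm, Real.dist_eq]⟩

lemma smallCover_dense {k : ℕ} (hk : 0 < k) (b : Fin (k - 1) → ℝ) (m : ℕ) :
    Dense {V : LPZ | SmallCover m (SchrodingerSpectrum (sieveWith (⇑(V : ℤ →ᵇ ℝ)) k b))} := by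
  rw [Metric.dense_iff]
  rintro ⟨V, hV⟩ ε hε
  obtain ⟨V0, hV0, hd⟩ := Metric.mem_closure_iff.1 hV (ε / 2) (by positivity)
  obtain ⟨W, hW, hWV, hc⟩ := cover_dense hk b m hV0 (ε := ε / 4) (by positivity)
  refine ⟨⟨W, subset_closure hW⟩, ?_, hc⟩
  rw [Metric.mem_ball, Subtype.dist_eq]
  have h1 : dist W V0 ≤ ε / 4 := by rwa [dist_eq_norm]
  have h2 := dist_triangle W V0 V
  rw [dist_comm V0 V] at h2
  change dist W V < ε
  linarith

/-- Fix `k` and a string `b ∈ ℝ^{k-1}`. For generic limit-periodic `V : ℤ → ℝ`,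
the spectrum of `H_{V^{[k,b]}}` is a Cantor set of zero Hausdorff dimension. -/
theorem sieveWith_generic_zero_dim_cantor (k : ℕ) (hk : 0 < k) (b : Fin (k - 1) → ℝ) :
    ∃ R : Set LPZ, IsGδ R ∧ Dense R ∧
      ∀ V ∈ R,
        IsZeroDimCantor (SchrodingerSpectrum (sieveWith (⇑(V : ℤ →ᵇ ℝ)) k b)) := by
  have : CompleteSpace LPZ := isClosed_closure.completeSpace_coe
  have hopen : ∀ m, IsOpen {V : LPZ | SmallCover m
      (SchrodingerSpectrum (sieveWith (⇑(V : ℤ →ᵇ ℝ)) k b))} := fun m =>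
    (smallCover_isOpen hk b m).preimage continuous_subtype_val
  refine ⟨⋂ m, {V : LPZ | SmallCover m (SchrodingerSpectrum (sieveWith (⇑(V : ℤ →ᵇ ℝ)) k b))},
    IsGδ.iInter fun m => (hopen m).isGδ,
    dense_iInter_of_isOpen_nat hopen (smallCover_dense hk b), fun V hV => ?_⟩
  have hdim := dimH_eq_zero_of_smallCover fun m => Set.mem_iInter.1 hV m
  refine ⟨spectrum_nonempty (sieveB k b V), spectrum_isCompact (sieveB k b V),
    spectrum_preperfect (sieveB k b V) (hasPeriods_sieve (hasPeriods_of_LPZ V.2) hk b), ?_, hdim⟩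
  by_contra hne
  have := Real.dimH_of_nonempty_interior (Set.nonempty_iff_ne_empty.2 hne)
  rw [hdim] at this
  simp at this
end
end

section
/- Let X be a Banach space and let A : X × ℝ → SL(2,ℝ) be an analytic map, extended to words over X by A(x♯y,E) = A(y,E)A(x,E). If A is non-ahyperbolic with exceptional set S, then A is gap-rich with exceptional set S. -/
/-!
Fix `E ∉ S`, a word `x` of length `m` and `ε > 0`, write `F w = A(w, E)` for words `w` of length
`m`, and suppose that no word `ε`-close to `x` has a hyperbolic matrix. All concatenations of words
in the ball `B` of radius `ε` around `x` are `ε`-close to `x`, so `|tr (F w)| ≤ 2` and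
`|tr (F v ^ k * F w)| ≤ 2` for all `v, w ∈ B` and `k ∈ ℕ`.

The function `tr ∘ F` is analytic. It is not constant on `B`: otherwise the identity theorem would
make it constant everywhere, although at the constant word `y₀ ⋯ y₀`, with `A(y₀, E)` hyperbolic,
its absolute value exceeds `2` (`two_lt_abs_trace_pow`). As `B` is connected, `tr (F v) = 2 cos θ`
for some `v ∈ B` and some `θ` with `θ / 2π` irrational. Then `F v = cos θ + sin θ J` with
`J ^ 2 = -1`, and `F v ^ k = cos kθ + sin kθ J` (`trace_pow_mul`). Density of the multiples of `θ`
in the circle turns the bounds `|tr (F v ^ k * F w)| ≤ 2` into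
`(tr (F w)) ^ 2 + (tr (J * F w)) ^ 2 ≤ 4` (`sq_add_sq_le_of_irrational`).

On the other hand `(tr M) ^ 2 + (tr (J * M)) ^ 2 ≥ 4` for every `M` of determinant one
(`four_le_sq_add_sq`). So the analytic function `w ↦ (tr (F w)) ^ 2 + (tr (J * F w)) ^ 2` equals `4`
on `B`, hence everywhere, which contradicts hyperbolicity of `F (y₀ ⋯ y₀) = A(y₀, E) ^ m`.
-/

open Set

noncomputable section

/-- `SL(2,ℝ)`. -/
abbrev SL2R := Matrix.SpecialLinearGroup (Fin 2) ℝ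

/-- A matrix in SL(2,ℝ) is hyperbolic if `|tr| > 2`. -/
def IsHyperbolic (M : SL2R) : Prop :=
  2 < |Matrix.trace (M : Matrix (Fin 2) (Fin 2) ℝ)|

/-- A matrix in SL(2,ℝ) is elliptic if `|tr| < 2`. -/
def IsElliptic (M : SL2R) : Prop :=
  |Matrix.trace (M : Matrix (Fin 2) (Fin 2) ℝ)| < 2

/-- A subset of ℝ is discrete if it has no accumulation points. -/
def IsDiscreteSet (S : Set ℝ) : Prop := ∀ x : ℝ, ¬ AccPt x (Filter.principal S)

/-- Extension of `A` to words: `A(y₁⋯y_m, E) = A(y_m,E) ⋯ A(y₁,E)`. -/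
def wordProd {X : Type*} (A : X → ℝ → SL2R) {m : ℕ} (y : Fin m → X) (E : ℝ) : SL2R :=
  ((List.ofFn fun i => A (y i) E).reverse).prod

/-- `A : X × ℝ → SL(2,ℝ)` is non-ahyperbolic with exceptional set `S`:
`S` is discrete and for every `E ∉ S` some `A(y,E)` is hyperbolic. -/
def NonAhyperbolic {X : Type*} (A : X → ℝ → SL2R) (S : Set ℝ) : Prop :=
  IsDiscreteSet S ∧ ∀ E : ℝ, E ∉ S → ∃ y : X, IsHyperbolic (A y E)

/-- Periodic extension `w^{♯ℤ}` of a finite word `w`. -/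
def perExt {α : Type*} [Zero α] {m : ℕ} (w : Fin m → α) : ℤ → α :=
  fun n =>
    if h : 0 < m then
      w ⟨(n % (m : ℤ)).toNat, by
        have h1 : 0 ≤ n % (m : ℤ) := Int.emod_nonneg n (by exact_mod_cast h.ne')
        have h2 : n % (m : ℤ) < (m : ℤ) := Int.emod_lt_of_pos n (by exact_mod_cast h)
        omega⟩
    else 0

/-- `A : X × ℝ → SL(2,ℝ)` is gap-rich with exceptional set `S`: `S` is discrete
and for every `E ∉ S`, any word over `X` can be perturbed (in the uniform metric
on periodic extensions) to a word whose matrix at `E` is hyperbolic. -/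
def GapRichMap {X : Type*} [NormedAddCommGroup X] (A : X → ℝ → SL2R) (S : Set ℝ) : Prop :=
  IsDiscreteSet S ∧
  ∀ E : ℝ, E ∉ S → ∀ m : ℕ, 0 < m → ∀ x : Fin m → X, ∀ ε : ℝ, 0 < ε →
    ∃ l : ℕ, 0 < l ∧ ∃ y : Fin l → X,
      (∀ j : ℤ, dist (perExt x j) (perExt y j) < ε) ∧
      IsHyperbolic (wordProd A y E)

/-! ### Traces of two-by-two matrices -/

theorem trace_sl2_mul_mul (M N : Matrix (Fin 2) (Fin 2) ℝ) (hM : M.det = 1) :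
    (M * (M * N)).trace = M.trace * (M * N).trace - N.trace := by
  rw [Matrix.det_fin_two] at hM
  simp only [Matrix.trace_fin_two, Matrix.mul_apply, Fin.sum_univ_two]
  linear_combination (-(N 0 0 + N 1 1)) * hM

/-- Nontrivial powers of a hyperbolic matrix are hyperbolic: by Cayley–Hamilton the traces
`t k = tr (M ^ k)` satisfy `t (k + 2) = t 1 * t (k + 1) - t k`, so `|t k|` increases strictly. -/
theorem two_lt_abs_trace_pow (M : Matrix (Fin 2) (Fin 2) ℝ) (hM : M.det = 1)
    (h : 2 < |M.trace|) (n : ℕ) (hn : 0 < n) : 2 < |(M ^ n).trace| := by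
  have key : ∀ k : ℕ, 2 ≤ |(M ^ k).trace| ∧ |(M ^ k).trace| < |(M ^ (k + 1)).trace| := by
    intro k
    induction k with
    | zero => simpa [Matrix.trace_fin_two, one_add_one_eq_two] using h
    | succ k ih =>
      obtain ⟨h1, h2⟩ := ih
      refine ⟨by linarith, ?_⟩
      have e : (M ^ (k + 1 + 1)).trace = M.trace * (M ^ (k + 1)).trace - (M ^ k).trace := by
        rw [pow_succ' M (k + 1), pow_succ' M k]
        exact trace_sl2_mul_mul M (M ^ k) hM
      have h3 := abs_sub_abs_le_abs_sub (M.trace * (M ^ (k + 1)).trace) (M ^ k).trace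
      rw [abs_mul] at h3
      rw [e]
      nlinarith
  obtain ⟨k, rfl⟩ : ∃ k, n = k + 1 := ⟨n - 1, by omega⟩
  obtain ⟨h1, h2⟩ := key k
  linarith

/-- If `J` is a complex structure on `ℝ²` and `det M = 1`, then
`(tr M) ^ 2 + (tr (J * M)) ^ 2 - 4 = -det (J * M - M * J) ≥ 0`. -/
theorem four_le_sq_add_sq (J M : Matrix (Fin 2) (Fin 2) ℝ) (hJt : J.trace = 0) (hJd : J.det = 1)
    (hM : M.det = 1) : 4 ≤ M.trace ^ 2 + (J * M).trace ^ 2 := by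
  rw [Matrix.det_fin_two] at hM hJd
  simp only [Matrix.trace_fin_two, Matrix.mul_apply, Fin.sum_univ_two] at hJt ⊢
  have hx : J 1 1 = -J 0 0 := by linarith
  rw [hx] at hJd ⊢
  clear hx hJt
  generalize J 0 0 = x at *
  generalize J 0 1 = y at *
  generalize J 1 0 = z at *
  generalize M 0 0 = a at *
  generalize M 0 1 = b at *
  generalize M 1 0 = c at *
  generalize M 1 1 = d at *
  have hy0 : 0 < y ^ 2 := by
    have : y ≠ 0 := by
      rintro rfl
      nlinarith [sq_nonneg x]
    positivity
  -- The matrix `N = J * M - M * J` has trace zero, satisfies `tr (J * N) = 0`, and has first row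
  -- `(y * c - b * z, 2 * x * b + y * (d - a))`; these facts turn `-y ^ 2 * det N` into a sum of
  -- two squares.
  have key : y ^ 2 * ((a + d) ^ 2 + (x * a + y * c + (z * b + -x * d)) ^ 2 - 4)
      = (y * (y * c - b * z) - x * (2 * x * b + y * (d - a))) ^ 2
        + (2 * x * b + y * (d - a)) ^ 2 := by
    have e1 : y * (x * a + y * c + (z * b + -x * d))
        = x * y * (a - d) + y ^ 2 * c - (1 + x ^ 2) * b := by
      linear_combination (-b) * hJd
    have e2 : y * (y * c - b * z) = y ^ 2 * c + b * (1 + x ^ 2) := by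
      linear_combination b * hJd
    rw [mul_sub, mul_add, ← mul_pow y (x * a + y * c + (z * b + -x * d)) 2, e1, e2]
    linear_combination (4 * y ^ 2) * hM
  by_contra hlt
  push Not at hlt
  nlinarith [mul_pos hy0 (sub_pos.2 hlt), sq_nonneg (2 * x * b + y * (d - a)),
    sq_nonneg (y * (y * c - b * z) - x * (2 * x * b + y * (d - a)))]

theorem pow_eq_cos_add_sin (R J : Matrix (Fin 2) (Fin 2) ℝ) (θ : ℝ)
    (hR : R = Real.cos θ • 1 + Real.sin θ • J) (hJ : J * J = -1) (k : ℕ) :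
    R ^ k = Real.cos (k * θ) • 1 + Real.sin (k * θ) • J := by
  induction k with
  | zero => simp
  | succ k ih =>
    rw [pow_succ, ih, hR]
    push_cast
    rw [add_mul (k : ℝ) 1 θ, one_mul, Real.cos_add, Real.sin_add]
    simp only [add_mul, mul_add, smul_mul_smul_comm, one_mul, mul_one, hJ]
    module

theorem trace_pow_mul (R J M : Matrix (Fin 2) (Fin 2) ℝ) (θ : ℝ)
    (hR : R = Real.cos θ • 1 + Real.sin θ • J) (hJ : J * J = -1) (k : ℕ) :
    (R ^ k * M).trace = Real.cos (k * θ) * M.trace + Real.sin (k * θ) * (J * M).trace := by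
  rw [pow_eq_cos_add_sin R J θ hR hJ k]
  simp [add_mul]

/-- A matrix of determinant one and trace `2 cos θ` with `sin θ ≠ 0` has the form
`cos θ + sin θ J` for a complex structure `J`. -/
theorem exists_complex_structure (R : Matrix (Fin 2) (Fin 2) ℝ) (hR : R.det = 1) (θ : ℝ)
    (ht : R.trace = 2 * Real.cos θ) (hs : Real.sin θ ≠ 0) :
    ∃ J : Matrix (Fin 2) (Fin 2) ℝ, R = Real.cos θ • 1 + Real.sin θ • J ∧ J * J = -1 ∧
      J.trace = 0 ∧ J.det = 1 := by
  have hcs := Real.sin_sq_add_cos_sq θ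
  rw [Matrix.det_fin_two] at hR
  rw [Matrix.trace_fin_two] at ht
  generalize Real.cos θ = p at *
  generalize Real.sin θ = q at *
  have hd : R 1 1 = 2 * p - R 0 0 := by linarith
  rw [hd] at hR
  refine ⟨q⁻¹ • (R - p • 1), ?_, ?_, ?_, ?_⟩
  · rw [smul_smul, mul_inv_cancel₀ hs]
    simp
  · ext i j
    fin_cases i <;> fin_cases j <;>
      simp [Matrix.mul_apply, Fin.sum_univ_two, hd] <;> field_simp <;> linarith
  · simp [Matrix.trace_fin_two, hd]
    right
    ring
  · simp [Matrix.det_fin_two, hd]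
    field_simp
    linarith

/-! ### Irrational rotations -/

/-- The multiples of `θ` are dense in the circle, so the bound on `cos φ * p + sin φ * q` holds for
all angles `φ`, and its maximum over `φ` is `√(p ^ 2 + q ^ 2)`. -/
theorem sq_add_sq_le_of_irrational (θ p q : ℝ) (hθ : Irrational (θ / (2 * Real.pi)))
    (h : ∀ k : ℕ, |Real.cos (k * θ) * p + Real.sin (k * θ) * q| ≤ 2) : p ^ 2 + q ^ 2 ≤ 4 := by
  have : Fact (0 < 2 * Real.pi) := ⟨Real.two_pi_pos⟩
  have hd : DenseRange (fun k : ℕ => k • ((θ : ℝ) : AddCircle (2 * Real.pi))) :=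
    denseRange_zsmul_iff_nsmul.1 (AddCircle.denseRange_zsmul_coe_iff.2 hθ)
  have hclosed : IsClosed {φ : Real.Angle | |φ.cos * p + φ.sin * q| ≤ 2} := by
    refine isClosed_le ?_ continuous_const
    have := Real.Angle.continuous_cos
    have := Real.Angle.continuous_sin
    fun_prop
  have hall : ∀ φ : Real.Angle, |φ.cos * p + φ.sin * q| ≤ 2 := by
    intro φ
    refine hd.induction_on (p := fun φ : Real.Angle => |φ.cos * p + φ.sin * q| ≤ 2) φ hclosed ?_
    intro k
    have e : k • ((θ : ℝ) : AddCircle (2 * Real.pi)) = ((k * θ : ℝ) : Real.Angle) := by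
      rw [← nsmul_eq_mul]
      rfl
    rw [e, Real.Angle.cos_coe, Real.Angle.sin_coe]
    exact h k
  -- The amplitude is attained at the argument of `p + q i`.
  have h1 := hall ((Complex.arg ⟨p, q⟩ : ℝ) : Real.Angle)
  rw [Real.Angle.cos_coe, Real.Angle.sin_coe] at h1
  have hp := Complex.norm_mul_cos_arg ⟨p, q⟩
  have hq := Complex.norm_mul_sin_arg ⟨p, q⟩
  have hsc := Real.sin_sq_add_cos_sq (Complex.arg ⟨p, q⟩)
  simp only at hp hq
  generalize Real.cos (Complex.arg ⟨p, q⟩) = c at *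
  generalize Real.sin (Complex.arg ⟨p, q⟩) = s at *
  generalize ‖(⟨p, q⟩ : ℂ)‖ = r at *
  have e1 : c * p + s * q = r := by
    rw [← hp, ← hq]
    linear_combination r * hsc
  have e2 : p ^ 2 + q ^ 2 = r ^ 2 := by
    rw [← hp, ← hq]
    linear_combination r ^ 2 * hsc
  rw [e1] at h1
  rw [e2]
  nlinarith [abs_le.1 h1]

/-- Holds because only countably many numbers are of the form `2 cos (2π r)` with `r` rational. -/
theorem exists_irrational_angle (a b : ℝ) (hab : a < b) (ha : -2 ≤ a) (hb : b ≤ 2) :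
    ∃ θ : ℝ, 2 * Real.cos θ ∈ Ioo a b ∧ Irrational (θ / (2 * Real.pi)) ∧ Real.sin θ ≠ 0 := by
  have hc : (Set.range fun r : ℚ => 2 * Real.cos (r * (2 * Real.pi))).Countable :=
    Set.countable_range _
  have hne : ¬ Ioo a b ⊆ Set.range fun r : ℚ => 2 * Real.cos (r * (2 * Real.pi)) := fun hsub =>
    hab.not_ge (Cardinal.Real.Ioo_countable_iff.1 (hc.mono hsub))
  obtain ⟨t, ht, htn⟩ := Set.not_subset.1 hne
  have hcos : 2 * Real.cos (Real.arccos (t / 2)) = t := by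
    rw [Real.cos_arccos (by linarith [ht.1]) (by linarith [ht.2])]
    ring
  refine ⟨Real.arccos (t / 2), by rwa [hcos], ?_, ?_⟩
  · rintro ⟨r, hr⟩
    refine htn ⟨r, ?_⟩
    simp only
    rw [hr, div_mul_cancel₀ _ Real.two_pi_pos.ne', hcos]
  · intro h0
    have := Real.sin_sq_add_cos_sq (Real.arccos (t / 2))
    rw [h0] at this
    nlinarith [ht.1, ht.2]

/-! ### Words -/

theorem wordProd_const {X : Type*} (A : X → ℝ → SL2R) (m : ℕ) (y : X) (E : ℝ) :
    wordProd A (fun _ : Fin m => y) E = A y E ^ m := by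
  simp [wordProd]

theorem analyticOnNhd_wordProd {X : Type*} [NormedAddCommGroup X] [NormedSpace ℝ X]
    (A : X → ℝ → SL2R)
    (hA : ∀ i j : Fin 2,
      AnalyticOnNhd ℝ
        (fun p : X × ℝ => (A p.1 p.2 : Matrix (Fin 2) (Fin 2) ℝ) i j) Set.univ)
    (E : ℝ) (m : ℕ) (i j : Fin 2) :
    AnalyticOnNhd ℝ (fun w : Fin m → X => (wordProd A w E : Matrix (Fin 2) (Fin 2) ℝ) i j)
      Set.univ := by
  have hlist : ∀ (W : Type _) [NormedAddCommGroup W] [NormedSpace ℝ W] (l : List (W → SL2R)),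
      (∀ G ∈ l, ∀ i j, AnalyticOnNhd ℝ
        (fun w => (G w : Matrix (Fin 2) (Fin 2) ℝ) i j) Set.univ) →
      ∀ i j, AnalyticOnNhd ℝ
        (fun w => ((l.map fun G => G w).prod : SL2R).1 i j) Set.univ := by
    intro W _ _ l
    induction l with
    | nil =>
      intro _ i j
      simpa using analyticOnNhd_const
    | cons G l ih =>
      intro hl i j
      have h1 := hl G (by simp)
      have h2 := ih fun G' hG' => hl G' (by simp [hG'])
      simp only [List.map_cons, List.prod_cons, Matrix.SpecialLinearGroup.coe_mul,
        Matrix.mul_apply, Fin.sum_univ_two]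
      exact ((h1 i 0).mul (h2 0 j)).add ((h1 i 1).mul (h2 1 j))
  have h := hlist (Fin m → X) ((List.ofFn fun (i : Fin m) (w : Fin m → X) => A (w i) E).reverse)
    (by
      intro G hG i j
      rw [List.mem_reverse, List.mem_ofFn] at hG
      obtain ⟨k, rfl⟩ := hG
      intro w _
      have hin : AnalyticAt ℝ (fun w : Fin m → X => (w k, E)) w :=
        ((ContinuousLinearMap.proj (R := ℝ) (φ := fun _ : Fin m => X) k).analyticAt w).prod
          analyticAt_const
      exact (hA i j (w k, E) (Set.mem_univ _)).fun_comp_of_eq hin rfl) i j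
  convert h using 2 with w
  simp [wordProd, List.map_reverse, List.map_ofFn, Function.comp_def]

/-- The concatenation of the words `u 0, …, u (n - 1)` of common length `m`. -/
def concatWord {X : Type*} {m n : ℕ} (hm : 0 < m) (u : Fin n → Fin m → X) : Fin (n * m) → X :=
  fun i => u ⟨i / m, Nat.div_lt_of_lt_mul (i.2.trans_eq (mul_comm n m))⟩
    ⟨i % m, Nat.mod_lt _ hm⟩

theorem wordProd_concatWord {X : Type*} (A : X → ℝ → SL2R) (E : ℝ) {m n : ℕ} (hm : 0 < m)
    (u : Fin n → Fin m → X) :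
    wordProd A (concatWord hm u) E = ((List.ofFn fun i => wordProd A (u i) E).reverse).prod := by
  unfold wordProd
  rw [List.ofFn_mul, List.reverse_flatten, List.prod_flatten, List.map_reverse, List.map_map,
    List.map_ofFn]
  congr 3
  funext i
  simp only [Function.comp_apply]
  congr 3
  funext j
  unfold concatWord
  have hj : ((i : ℕ) * m + j) / m = i := by
    rw [mul_comm, Nat.mul_add_div hm, Nat.div_eq_of_lt j.2, add_zero]
  have hj' : ((i : ℕ) * m + j) % m = j := by
    rw [mul_comm, Nat.mul_add_mod, Nat.mod_eq_of_lt j.2]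
  simp only [hj, hj']

theorem dist_perExt_concatWord_lt {X : Type*} [NormedAddCommGroup X] {m n : ℕ} (hm : 0 < m)
    (hn : 0 < n) (x : Fin m → X) (u : Fin n → Fin m → X) (ε : ℝ)
    (hu : ∀ i k, dist (x k) (u i k) < ε) (j : ℤ) :
    dist (perExt x j) (perExt (concatWord hm u) j) < ε := by
  have hnm : 0 < n * m := Nat.mul_pos hn hm
  have hmod : (j % ((n * m : ℕ) : ℤ)).toNat % m = (j % (m : ℤ)).toNat := by
    have h1 : 0 ≤ j % ((n * m : ℕ) : ℤ) := Int.emod_nonneg _ (by exact_mod_cast hnm.ne')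
    have h2 : 0 ≤ j % (m : ℤ) := Int.emod_nonneg _ (by exact_mod_cast hm.ne')
    apply Int.ofNat_inj.1
    rw [Int.natCast_mod, Int.toNat_of_nonneg h1, Int.toNat_of_nonneg h2]
    exact Int.emod_emod_of_dvd _ (by push_cast; exact Dvd.intro_left _ rfl)
  unfold perExt
  rw [dif_pos hm, dif_pos hnm]
  unfold concatWord
  simp only [hmod]
  exact hu _ _

/-- If `X` is a Banach space and `A : X × ℝ → SL(2,ℝ)` is analytic and
non-ahyperbolic with exceptional set `S`, then `A` is gap-rich with
exceptional set `S`. -/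
theorem nonAhyperbolic_gapRich {X : Type*}
    [NormedAddCommGroup X] [NormedSpace ℝ X] [CompleteSpace X]
    (A : X → ℝ → SL2R)
    (hA : ∀ i j : Fin 2,
      AnalyticOnNhd ℝ
        (fun p : X × ℝ => (A p.1 p.2 : Matrix (Fin 2) (Fin 2) ℝ) i j) Set.univ)
    (S : Set ℝ) (hNA : NonAhyperbolic A S) :
    GapRichMap A S := by
  obtain ⟨hS, hNA⟩ := hNA
  refine ⟨hS, fun E hE m hm x ε hε => ?_⟩
  obtain ⟨y₀, hy₀⟩ := hNA E hE
  by_contra hcon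
  push Not at hcon
  let F : (Fin m → X) → Matrix (Fin 2) (Fin 2) ℝ := fun w => (wordProd A w E).1
  have hFdet : ∀ w, (F w).det = 1 := fun w => (wordProd A w E).2
  have hFan : ∀ i j, AnalyticOnNhd ℝ (fun w => F w i j) univ := analyticOnNhd_wordProd A hA E m
  have htr : AnalyticOnNhd ℝ (fun w => (F w).trace) univ := by
    simp only [Matrix.trace_fin_two]
    exact (hFan 0 0).add (hFan 1 1)
  have hconst : 2 < |(F fun _ => y₀).trace| := by
    have e : F (fun _ => y₀) = (A y₀ E).1 ^ m := by
      simp only [F, wordProd_const]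
      exact Matrix.SpecialLinearGroup.coe_pow _ _
    rw [e]
    exact two_lt_abs_trace_pow _ (A y₀ E).2 hy₀ m hm
  have hball : ∀ v ∈ Metric.ball x ε, ∀ w ∈ Metric.ball x ε, ∀ k : ℕ,
      |(F v ^ k * F w).trace| ≤ 2 := by
    intro v hv w hw k
    have hclose : ∀ u ∈ Metric.ball x ε, ∀ i, dist (x i) (u i) < ε := fun u hu i =>
      (dist_le_pi_dist x u i).trans_lt (by rwa [dist_comm])
    -- Later letters multiply on the left, so `w` followed by `k` copies of `v` gives
    -- `F v ^ k * F w`.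
    let u : Fin (k + 1) → Fin m → X := Fin.cons w fun _ => v
    have hu : ∀ i l, dist (x l) (u i l) < ε := by
      intro i l
      refine Fin.cases ?_ (fun i => ?_) i
      · exact hclose w hw l
      · exact hclose v hv l
    have h := hcon ((k + 1) * m) (Nat.mul_pos k.succ_pos hm) (concatWord hm u)
      (dist_perExt_concatWord_lt hm k.succ_pos x u ε hu)
    rw [wordProd_concatWord] at h
    simpa [IsHyperbolic, u, List.ofFn_succ, F] using h
  have hle : ∀ w ∈ Metric.ball x ε, |(F w).trace| ≤ 2 := fun w hw => by
    simpa using hball w hw w hw 0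
  have hxB : x ∈ Metric.ball x ε := Metric.mem_ball_self hε
  have hnhds : Metric.ball x ε ∈ nhds x := Metric.ball_mem_nhds x hε
  obtain ⟨w₁, hw₁, hne⟩ : ∃ w ∈ Metric.ball x ε, (F w).trace ≠ (F x).trace := by
    by_contra hc
    push Not at hc
    have heq := htr.eq_of_eventuallyEq (analyticOnNhd_const (v := (F x).trace))
      (Filter.eventually_of_mem hnhds hc)
    have h1 : (F fun _ => y₀).trace = (F x).trace := congrFun heq _
    rw [h1] at hconst
    exact absurd (hle x hxB) (not_le.2 hconst)
  obtain ⟨v, hv, θ, ht, hirr, hsin⟩ : ∃ v ∈ Metric.ball x ε, ∃ θ : ℝ,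
      (F v).trace = 2 * Real.cos θ ∧ Irrational (θ / (2 * Real.pi)) ∧ Real.sin θ ≠ 0 := by
    have main : ∀ a ∈ Metric.ball x ε, ∀ b ∈ Metric.ball x ε, (F a).trace < (F b).trace →
        ∃ v ∈ Metric.ball x ε, ∃ θ : ℝ,
          (F v).trace = 2 * Real.cos θ ∧ Irrational (θ / (2 * Real.pi)) ∧ Real.sin θ ≠ 0 := by
      intro a ha b hb hab
      obtain ⟨θ, h1, h2, h3⟩ := exists_irrational_angle _ _ hab (abs_le.1 (hle a ha)).1
        (abs_le.1 (hle b hb)).2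
      obtain ⟨v, hv, hvt⟩ := (convex_ball x ε).isPreconnected.intermediate_value ha hb
        (htr.continuousOn.mono (subset_univ _)) (Ioo_subset_Icc_self h1)
      exact ⟨v, hv, θ, hvt, h2, h3⟩
    rcases lt_or_gt_of_ne hne with h | h
    · exact main _ hw₁ _ hxB h
    · exact main _ hxB _ hw₁ h
  obtain ⟨J, hR, hJJ, hJt, hJd⟩ := exists_complex_structure (F v) (hFdet v) θ ht hsin
  have hg : AnalyticOnNhd ℝ (fun w => (F w).trace ^ 2 + (J * F w).trace ^ 2) univ := by
    refine (htr.pow 2).add (AnalyticOnNhd.pow ?_ 2)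
    simp only [Matrix.trace_fin_two, Matrix.mul_apply, Fin.sum_univ_two]
    exact ((analyticOnNhd_const.mul (hFan 0 0)).add (analyticOnNhd_const.mul (hFan 1 0))).add
      ((analyticOnNhd_const.mul (hFan 0 1)).add (analyticOnNhd_const.mul (hFan 1 1)))
  have hg4 : ∀ w ∈ Metric.ball x ε, (F w).trace ^ 2 + (J * F w).trace ^ 2 = 4 := by
    intro w hw
    refine le_antisymm (sq_add_sq_le_of_irrational θ _ _ hirr fun k => ?_)
      (four_le_sq_add_sq J (F w) hJt hJd (hFdet w))
    rw [← trace_pow_mul (F v) J (F w) θ hR hJJ k]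
    exact hball v hv w hw k
  have heq := hg.eq_of_eventuallyEq (analyticOnNhd_const (v := (4 : ℝ)))
    (Filter.eventually_of_mem hnhds hg4)
  have h4 : (F fun _ => y₀).trace ^ 2 + (J * F fun _ => y₀).trace ^ 2 = 4 := congrFun heq _
  rw [← sq_abs (F fun _ => y₀).trace] at h4
  nlinarith [sq_nonneg (J * F fun _ => y₀).trace]
end
end
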